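/- arXiv:2411.02978 — 2 statements merged into one kernel-verified Lean document; each statement's English description precedes it below -/
import Mathlib

section
/- For every nonnegative integer n, b'₅(100n+31) ≡ 0 (mod 4). -/
/-- `b5' n` is the number of partitions of `n` into distinct parts,
none of which is divisible by `5` (with `b5' 0 = 1`). -/
def b5' (n : ℕ) : ℕ :=
  ((Nat.Partition.distincts n).filter (fun p => ∀ i ∈ p.parts, ¬ (5 ∣ i))).card

open PowerSeries Finset Filter Topology
open scoped PowerSeries.WithPiTopology

namespace B5

/-- Gaussian binomial coefficients evaluated at a ring element. -/
noncomputable def gb {R : Type*} [CommRing R] (q : R) : ℕ → ℕ → R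
  | _, 0 => 1
  | 0, _ + 1 => 0
  | n + 1, k + 1 => gb q n (k + 1) + q ^ (n - k) * gb q n k

/-- Finite q-factorial. -/
noncomputable def qp {R : Type*} [CommRing R] (q : R) (n : ℕ) : R :=
  ∏ i ∈ range n, (1 - q ^ (i + 1))

section Gauss
variable {R : Type*} [CommRing R] (q : R)

lemma gb_zero_right (n : ℕ) : gb q n 0 = 1 := by cases n <;> simp [gb]

lemma gb_eq_zero {n k : ℕ} (h : n < k) : gb q n k = 0 := by
  induction n generalizing k with
  | zero => cases k with
    | zero => omega
    | succ k => simp [gb]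
  | succ n ih => cases k with
    | zero => omega
    | succ k => simp [gb, ih (show n < k + 1 by omega), ih (show n < k by omega)]

lemma gb_self (n : ℕ) : gb q n n = 1 := by
  induction n with
  | zero => simp [gb]
  | succ n ih => simp [gb, ih, gb_eq_zero]

lemma gb_mul (k l : ℕ) : gb q (k + l) k * (qp q k * qp q l) = qp q (k + l) := by
  induction hN : k + l generalizing k l with
  | zero =>
    obtain ⟨rfl, rfl⟩ : k = 0 ∧ l = 0 := by omega
    simp [gb, qp]
  | succ N ih =>
    cases k with
    | zero =>
      obtain rfl : l = N + 1 := by omega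
      simp [gb, qp]
    | succ k =>
      cases l with
      | zero =>
        obtain rfl : k = N := by omega
        rw [gb_self]; simp [qp]
      | succ l =>
        have h1 := ih (k + 1) l (by omega)
        have h2 := ih k (l + 1) (by omega)
        have e1 : qp q (k + 1) = qp q k * (1 - q ^ (k + 1)) := by simp [qp, prod_range_succ]
        have e2 : qp q (l + 1) = qp q l * (1 - q ^ (l + 1)) := by simp [qp, prod_range_succ]
        have e3 : qp q (N + 1) = qp q N * (1 - q ^ (N + 1)) := by simp [qp, prod_range_succ]
        have e4 : N - k = l + 1 := by omega
        have e5 : q ^ (N + 1) = q ^ (k + 1) * q ^ (l + 1) := by rw [← pow_add]; congr 1; omega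
        rw [gb, e4, e3, e5, add_mul]
        rw [e1] at h1 ⊢
        rw [e2] at h2 ⊢
        linear_combination (1 - q ^ (l + 1)) * h1 + q ^ (l + 1) * (1 - q ^ (k + 1)) * h2

lemma gauss_prod (x y : R) (N : ℕ) :
    ∏ i ∈ range N, (y + x * q ^ i) =
      ∑ k ∈ range (N + 1), q ^ (k.choose 2) * gb q N k * x ^ k * y ^ (N - k) := by
  induction N with
  | zero => simp [gb]
  | succ N ih =>
    rw [prod_range_succ, ih, sum_mul, sum_range_succ' _ (N + 1)]
    have key : ∀ k ∈ range (N + 1), q ^ ((k + 1).choose 2) * gb q (N + 1) (k + 1) * x ^ (k + 1) *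
        y ^ (N + 1 - (k + 1)) =
        q ^ ((k + 1).choose 2) * gb q N (k + 1) * x ^ (k + 1) * y ^ (N - k) +
        q ^ (k.choose 2) * gb q N k * x ^ k * y ^ (N - k) * (x * q ^ N) := by
      intro k hk
      have hk' : k ≤ N := by simpa [Nat.lt_succ_iff] using hk
      have e : (k + 1).choose 2 = k + k.choose 2 := by
        rw [Nat.choose_succ_succ' k 1]; simp
      have e2 : q ^ N = q ^ k * q ^ (N - k) := by rw [← pow_add]; congr 1; omega
      rw [gb, e, e2, Nat.add_sub_add_right]
      ring
    rw [sum_congr rfl key, sum_add_distrib]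
    simp only [mul_add, sum_add_distrib]
    rw [sum_range_succ' (fun k => q ^ (k.choose 2) * gb q N k * x ^ k * y ^ (N - k) * y) N,
      sum_range_succ (fun k => q ^ ((k + 1).choose 2) * gb q N (k + 1) * x ^ (k + 1) * y ^ (N - k)) N,
      gb_eq_zero q (Nat.lt_succ_self N)]
    have : ∀ k ∈ range N, q ^ ((k + 1).choose 2) * gb q N (k + 1) * x ^ (k + 1) *
        y ^ (N - (k + 1)) * y =
        q ^ ((k + 1).choose 2) * gb q N (k + 1) * x ^ (k + 1) * y ^ (N - k) := by
      intro k hk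
      have hk' : k < N := by simpa using hk
      have : N - k = N - (k + 1) + 1 := by omega
      rw [this, pow_succ]; ring
    rw [sum_congr rfl this]
    simp [gb_zero_right]
    ring
end Gauss

/-- theta exponent -/
def ex (s t : ℕ) (m : ℤ) : ℕ := ((s : ℤ) * (m * (m + 1) / 2) + t * (m * (m - 1) / 2)).toNat

lemma two_ex (s t : ℕ) (m : ℤ) : 2 * (ex s t m : ℤ) = s * (m * (m + 1)) + t * (m * (m - 1)) := by
  have h1 : 2 * (m * (m + 1) / 2) = m * (m + 1) :=
    Int.mul_ediv_cancel' (Int.even_mul_succ_self m).two_dvd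
  have h2 : 2 * (m * (m - 1) / 2) = m * (m - 1) :=
    Int.mul_ediv_cancel' (Int.even_mul_pred_self m).two_dvd
  have h3 : 0 ≤ m * (m + 1) := by rcases lt_or_ge m 0 with h | h <;> nlinarith
  have h4 : 0 ≤ m * (m - 1) := by rcases le_or_gt m 0 with h | h <;> nlinarith
  have h5 : 0 ≤ (s : ℤ) * (m * (m + 1) / 2) + t * (m * (m - 1) / 2) := by
    have := Int.ediv_nonneg h3 (show (0:ℤ) ≤ 2 by norm_num)
    have := Int.ediv_nonneg h4 (show (0:ℤ) ≤ 2 by norm_num)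
    positivity
  rw [ex, Int.toNat_of_nonneg h5]
  linear_combination (s : ℤ) * h1 + t * h2

lemma natAbs_le_ex {s t : ℕ} (hs : 0 < s) (ht : 0 < t) (m : ℤ) : m.natAbs ≤ ex s t m := by
  have h := two_ex s t m
  have h3 : 0 ≤ m * (m + 1) := by rcases lt_or_ge m 0 with h | h <;> nlinarith
  have h4 : 0 ≤ m * (m - 1) := by rcases le_or_gt m 0 with h | h <;> nlinarith
  have hs' : (1:ℤ) ≤ s := by exact_mod_cast hs
  have ht' : (1:ℤ) ≤ t := by exact_mod_cast ht
  zify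
  rcases abs_cases m with ⟨h5, h6⟩ | ⟨h5, h6⟩ <;> rw [h5] <;> nlinarith

lemma two_choose (k : ℕ) : 2 * ((k.choose 2 : ℕ) : ℤ) = k * (k - 1) := by
  induction k with
  | zero => simp
  | succ k ih =>
    rw [Nat.choose_succ_succ' k 1]; push_cast
    rw [Nat.choose_one_right]
    linear_combination ih

lemma eps_pow {ε : ℤ} (h : ε * ε = 1) (n k : ℕ) :
    ε ^ k = ε ^ n * ε ^ (((k : ℤ) - n).natAbs) := by
  rcases mul_self_eq_one_iff.mp h with rfl | rfl
  · simp
  · rw [← pow_add]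
    apply neg_one_pow_congr
    rw [Nat.even_add, Int.natAbs_even, Int.even_sub, Int.even_coe_nat, Int.even_coe_nat]
    tauto

/-- Theta term. -/
noncomputable def th (ε : ℤ) (s t : ℕ) (m : ℤ) : ℤ⟦X⟧ := ((ε ^ m.natAbs : ℤ) : ℤ⟦X⟧) * X ^ ex s t m

lemma finite_jtp {ε : ℤ} (h : ε * ε = 1) (s t n : ℕ) :
    (∏ i ∈ range n, (1 + (ε : ℤ⟦X⟧) * X ^ (s + (s + t) * i))) *
      (∏ i ∈ range n, (1 + (ε : ℤ⟦X⟧) * X ^ (t + (s + t) * i))) =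
    ∑ k ∈ range (2 * n + 1), gb (X ^ (s + t)) (2 * n) k * th ε s t ((k : ℤ) - n) := by
  set q : ℤ⟦X⟧ := X ^ (s + t) with hq
  set z : ℤ⟦X⟧ := (ε : ℤ⟦X⟧) * X ^ s with hz
  have hεε : (ε : ℤ⟦X⟧) * ε = 1 := by rw [← Int.cast_mul, h, Int.cast_one]
  have hq0 : q ≠ 0 := pow_ne_zero _ X_ne_zero
  have hz0 : z ≠ 0 := by
    apply mul_ne_zero _ (pow_ne_zero _ X_ne_zero)
    rintro h0
    rw [h0] at hεε; simp at hεε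
  have main := gauss_prod q z (q ^ n) (2 * n)
  have lhs : ∏ i ∈ range (2 * n), (q ^ n + z * q ^ i) =
      (q ^ (n.choose 2 + n * n) * z ^ n) *
      ((∏ i ∈ range n, (1 + (ε : ℤ⟦X⟧) * X ^ (s + (s + t) * i))) *
      (∏ i ∈ range n, (1 + (ε : ℤ⟦X⟧) * X ^ (t + (s + t) * i)))) := by
    rw [two_mul, prod_range_add]
    have a1 : ∏ i ∈ range n, (q ^ n + z * q ^ (n + i)) = q ^ (n * n) *
        ∏ i ∈ range n, (1 + (ε : ℤ⟦X⟧) * X ^ (s + (s + t) * i)) := by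
      have : q ^ (n * n) = ∏ i ∈ range n, q ^ n := by simp [pow_mul]
      rw [this, ← prod_mul_distrib]
      refine prod_congr rfl fun i _ => ?_
      rw [hz, hq]; ring
    have a2 : ∏ i ∈ range n, (q ^ n + z * q ^ i) = q ^ (n.choose 2) * z ^ n *
        ∏ i ∈ range n, (1 + (ε : ℤ⟦X⟧) * X ^ (t + (s + t) * i)) := by
      have e1 : q ^ (n.choose 2) = ∏ i ∈ range n, q ^ i := by
        rw [prod_pow_eq_pow_sum, Finset.sum_range_id, Nat.choose_two_right]
      have e2 : z ^ n = ∏ i ∈ range n, z := by simp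
      rw [← prod_range_reflect (fun i => 1 + (ε : ℤ⟦X⟧) * X ^ (t + (s + t) * i)), e1, e2,
        ← prod_mul_distrib, ← prod_mul_distrib]
      refine prod_congr rfl fun i hi => ?_
      have hi' : i < n := by simpa using hi
      obtain ⟨j, rfl⟩ : ∃ j, n = i + 1 + j := ⟨n - 1 - i, by omega⟩
      have : i + 1 + j - 1 - i = j := by omega
      rw [this, hz, hq]
      linear_combination (- (X : ℤ⟦X⟧) ^ ((s + t) * (i + 1 + j))) * hεε
    rw [a1, a2, pow_add]; ring
  rw [lhs] at main
  have hc : q ^ (n.choose 2 + n * n) * z ^ n ≠ 0 := mul_ne_zero (pow_ne_zero _ hq0) (pow_ne_zero _ hz0)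
  apply mul_left_cancel₀ hc
  rw [main, mul_sum]
  refine sum_congr rfl fun k hk => ?_
  have hk' : k ≤ 2 * n := by simpa [Nat.lt_succ_iff] using hk
  have hexp : (s + t) * k.choose 2 + s * k + (s + t) * (n * (2 * n - k)) =
      (s + t) * (n.choose 2 + n * n) + s * n + ex s t ((k : ℤ) - n) := by
    zify [hk']
    have h1 := two_ex s t ((k : ℤ) - n)
    have h2 := two_choose k
    have h3 := two_choose n
    have : (2 : ℤ) ≠ 0 := by norm_num
    apply mul_left_cancel₀ this
    linear_combination ((s : ℤ) + t) * h2 - (s + t) * h3 - h1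
  have hx := congrArg (fun e => (X : ℤ⟦X⟧) ^ e) hexp
  simp only [pow_add] at hx
  have hε : (ε : ℤ⟦X⟧) ^ k = (ε : ℤ⟦X⟧) ^ n * ((ε ^ ((k : ℤ) - n).natAbs : ℤ) : ℤ⟦X⟧) := by
    have := eps_pow h n k
    exact_mod_cast congrArg (Int.cast : ℤ → ℤ⟦X⟧) this
  rw [th, hz, mul_pow, mul_pow, hε, hq]
  simp only [← pow_mul]
  linear_combination (gb (X ^ (s + t)) (2 * n) k * (ε : ℤ⟦X⟧) ^ n * ((ε ^ ((k : ℤ) - n).natAbs : ℤ) : ℤ⟦X⟧)) * hx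

/-- Infinite product `∏ (1 + ε X^(a+m i))`. -/
noncomputable def Pr (ε : ℤ) (a m : ℕ) : ℤ⟦X⟧ := ∏' i : ℕ, (1 + (ε : ℤ⟦X⟧) * X ^ (a + m * i))

lemma tendsto_of_eventually {f : ℕ → ℤ⟦X⟧} {g : ℤ⟦X⟧}
    (h : ∀ d, ∀ᶠ n in atTop, coeff d (f n) = coeff d g) : Tendsto f atTop (𝓝 g) := by
  rw [WithPiTopology.tendsto_iff_coeff_tendsto]
  intro d
  exact tendsto_nhds_of_eventually_eq (h d)

lemma eventually_of_tendsto {ι : Type*} {l : Filter ι} {f : ι → ℤ⟦X⟧} {g : ℤ⟦X⟧}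
    (h : Tendsto f l (𝓝 g)) (d : ℕ) : ∀ᶠ n in l, coeff d (f n) = coeff d g := by
  rw [WithPiTopology.tendsto_iff_coeff_tendsto] at h
  simpa using h d

lemma multipliable_Pr (ε : ℤ) (a : ℕ) {m : ℕ} (hm : 0 < m) :
    Multipliable (fun i : ℕ => (1 + (ε : ℤ⟦X⟧) * X ^ (a + m * i))) := by
  apply WithPiTopology.multipliable_one_add_of_tendsto_order_atTop_nhds_top
  refine ENat.tendsto_nhds_top_iff_natCast_lt.mpr fun n ↦ eventually_atTop.mpr ⟨n + 1, ?_⟩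
  intro b hb
  refine lt_of_lt_of_le ?_ (le_order_mul _ _)
  rw [order_X_pow]
  refine lt_of_lt_of_le ?_ le_add_self
  have : n < a + m * b := by nlinarith
  exact_mod_cast this

lemma tendsto_Pr (ε : ℤ) (a : ℕ) {m : ℕ} (hm : 0 < m) :
    Tendsto (fun n => ∏ i ∈ range n, (1 + (ε : ℤ⟦X⟧) * X ^ (a + m * i))) atTop (𝓝 (Pr ε a m)) :=
  (multipliable_Pr ε a hm).hasProd.tendsto_prod_nat

lemma Pr_mul_neg (ε : ℤ) (h : ε * ε = 1) (a : ℕ) {m : ℕ} (hm : 0 < m) :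
    Pr ε a m * Pr (-ε) a m = Pr (-1) (2 * a) (2 * m) := by
  rw [Pr, Pr, ← (multipliable_Pr ε a hm).tprod_mul (multipliable_Pr (-ε) a hm), Pr]
  refine tprod_congr fun i => ?_
  have hεε : (ε : ℤ⟦X⟧) * ε = 1 := by rw [← Int.cast_mul, h, Int.cast_one]
  push_cast
  have e : (X : ℤ⟦X⟧) ^ (2 * a + 2 * m * i) = X ^ (a + m * i) * X ^ (a + m * i) := by
    rw [← pow_add]; congr 1; ring
  rw [e]
  linear_combination (- X ^ (a + m * i) * X ^ (a + m * i)) * hεε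

lemma Pr_split2 (ε : ℤ) (a : ℕ) {m : ℕ} (hm : 0 < m) :
    Pr ε a m = Pr ε a (2 * m) * Pr ε (a + m) (2 * m) := by
  have h1 := (tendsto_Pr ε a hm).comp (tendsto_id.const_mul_atTop' (show 0 < 2 by norm_num))
  have h2 := (tendsto_Pr ε a (show 0 < 2 * m by omega)).mul
    (tendsto_Pr ε (a + m) (show 0 < 2 * m by omega))
  refine tendsto_nhds_unique h1 (h2.congr fun n => ?_)
  simp only [Function.comp, id]
  induction n with
  | zero => simp
  | succ n ih =>
    rw [prod_range_succ, prod_range_succ, show 2 * (n + 1) = 2 * n + 1 + 1 by ring,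
      prod_range_succ, prod_range_succ, ← ih]
    ring

lemma Pr_split3 (ε : ℤ) (a : ℕ) {m : ℕ} (hm : 0 < m) :
    Pr ε a m = Pr ε a (3 * m) * Pr ε (a + m) (3 * m) * Pr ε (a + 2 * m) (3 * m) := by
  have h1 := (tendsto_Pr ε a hm).comp (tendsto_id.const_mul_atTop' (show 0 < 3 by norm_num))
  have h2 := ((tendsto_Pr ε a (show 0 < 3 * m by omega)).mul
    (tendsto_Pr ε (a + m) (show 0 < 3 * m by omega))).mul
    (tendsto_Pr ε (a + 2 * m) (show 0 < 3 * m by omega))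
  refine tendsto_nhds_unique h1 (h2.congr fun n => ?_)
  simp only [Function.comp, id]
  induction n with
  | zero => simp
  | succ n ih =>
    rw [prod_range_succ, prod_range_succ, prod_range_succ,
      show 3 * (n + 1) = 3 * n + 1 + 1 + 1 by ring,
      prod_range_succ, prod_range_succ, prod_range_succ, ← ih]
    ring

lemma Pr_ne_zero (ε : ℤ) {a m : ℕ} (ha : 0 < a) (hm : 0 < m) : Pr ε a m ≠ 0 := by
  intro h0
  have h := tendsto_Pr ε a hm
  obtain ⟨n, hn⟩ := (eventually_of_tendsto h 0).exists
  rw [h0] at hn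
  simp only [coeff_zero_eq_constantCoeff, map_prod, map_zero] at hn
  rw [prod_eq_zero_iff] at hn
  obtain ⟨i, _, hi⟩ := hn
  have : a + m * i ≠ 0 := by omega
  simp [zero_pow this] at hi

lemma summable_of_le {ι : Type*} (f : ι → ℤ⟦X⟧) (h : ∀ d, {i | coeff d (f i) ≠ 0}.Finite) :
    Summable f := by
  rw [WithPiTopology.summable_iff_summable_coeff]
  intro d
  exact summable_of_hasFiniteSupport (h d)

lemma th_dvd {ε : ℤ} {s t : ℕ} (hs : 0 < s) (ht : 0 < t) (m : ℤ) : X ^ m.natAbs ∣ th ε s t m :=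
  (pow_dvd_pow X (natAbs_le_ex hs ht m)).mul_left _

lemma coeff_th_eq_zero {ε : ℤ} {s t : ℕ} (hs : 0 < s) (ht : 0 < t) (m : ℤ) {d : ℕ}
    (hd : d < m.natAbs) : coeff d (th ε s t m) = 0 :=
  (X_pow_dvd_iff.mp (th_dvd hs ht m)) d hd

lemma finite_natAbs_le (d : ℕ) : {m : ℤ | m.natAbs ≤ d}.Finite :=
  (Set.finite_Icc (-(d:ℤ)) d).subset fun m hm => by
    simp only [Set.mem_ofPred_eq, Set.mem_Icc] at *; omega

lemma summable_th (ε : ℤ) {s t : ℕ} (hs : 0 < s) (ht : 0 < t) : Summable (th ε s t) := by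
  apply summable_of_le
  intro d
  refine (finite_natAbs_le d).subset fun m hm => ?_
  by_contra h
  exact hm (coeff_th_eq_zero hs ht m (by simpa using h))

lemma qp_congr {c d M N : ℕ} (hc : 0 < c) (hM : d ≤ M) (hN : d ≤ N) :
    (X : ℤ⟦X⟧) ^ (d + 1) ∣ qp (X ^ c) M - qp (X ^ c) N := by
  have key : ∀ j, (X : ℤ⟦X⟧) ^ (d + 1) ∣ qp (X ^ c) (d + j) - qp (X ^ c) d := by
    intro j
    induction j with
    | zero => simp
    | succ j ih =>
      have e : qp (X ^ c : ℤ⟦X⟧) (d + (j + 1)) = qp (X ^ c) (d + j) -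
          qp (X ^ c) (d + j) * X ^ (c * (d + j + 1)) := by
        rw [qp, qp, ← add_assoc, prod_range_succ]; ring
      rw [e, sub_right_comm]
      refine dvd_sub ih (Dvd.dvd.mul_left (pow_dvd_pow _ ?_) _)
      nlinarith
  obtain ⟨i, rfl⟩ := Nat.exists_eq_add_of_le hM
  obtain ⟨j, rfl⟩ := Nat.exists_eq_add_of_le hN
  have := dvd_sub (key i) (key j)
  simpa using this

lemma isUnit_qp {c : ℕ} (hc : 0 < c) (n : ℕ) : IsUnit (qp (X ^ c : ℤ⟦X⟧) n) := by
  rw [PowerSeries.isUnit_iff_constantCoeff, qp, map_prod]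
  have : ∀ i ∈ range n, constantCoeff (1 - (X ^ c : ℤ⟦X⟧) ^ (i + 1)) = 1 := by
    intro i _
    simp [hc.ne']
  rw [prod_congr rfl this]; simp

lemma gb_congr {c d k l n : ℕ} (hc : 0 < c) (hk : d ≤ k) (hl : d ≤ l) (hn : d ≤ n) :
    (X : ℤ⟦X⟧) ^ (d + 1) ∣ gb (X ^ c) (k + l) k * qp (X ^ c) n - 1 := by
  have h := gb_mul (X ^ c : ℤ⟦X⟧) k l
  set Q := qp (X ^ c : ℤ⟦X⟧)
  obtain ⟨a, ha⟩ := qp_congr hc hk hn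
  obtain ⟨b, hb⟩ := qp_congr hc hl hn
  obtain ⟨e, he⟩ := qp_congr hc (show d ≤ k + l by omega) hn
  have hu := isUnit_qp hc n
  rw [← hu.dvd_mul_right (b := gb (X ^ c) (k + l) k * qp (X ^ c) n - 1)]
  set g := gb (X ^ c : ℤ⟦X⟧) (k + l) k
  refine ⟨e - g * a * Q l - g * Q n * b, ?_⟩
  linear_combination h + he - g * Q l * ha - g * Q n * hb

theorem jtp {ε : ℤ} (h : ε * ε = 1) {s t : ℕ} (hs : 0 < s) (ht : 0 < t) :
    Pr ε s (s + t) * Pr ε t (s + t) * Pr (-1) (s + t) (s + t) = ∑' m, th ε s t m := by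
  have hc : 0 < s + t := by omega
  have h1 := ((tendsto_Pr ε s hc).mul (tendsto_Pr ε t hc)).mul (tendsto_Pr (-1) (s + t) hc)
  refine tendsto_nhds_unique h1 (tendsto_of_eventually fun d => ?_)
  have h2 := eventually_of_tendsto (summable_th ε hs ht).hasSum d
  rw [SummationFilter.unconditional_filter, eventually_atTop] at h2
  obtain ⟨S, hS⟩ := h2
  have hS' : ∃ B : ℕ, S ⊆ Finset.Icc (-(B : ℤ)) B := by
    refine ⟨S.sup Int.natAbs, fun m hm => ?_⟩
    have := Finset.le_sup (f := Int.natAbs) hm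
    rw [Finset.mem_Icc]; omega
  obtain ⟨B, hB⟩ := hS'
  filter_upwards [eventually_ge_atTop (B + 2 * d)] with n hn
  have hsum : ∑ m ∈ Finset.Icc (-(n : ℤ)) n, th ε s t m =
      ∑ k ∈ range (2 * n + 1), th ε s t ((k : ℤ) - n) := by
    symm
    refine sum_bij (fun k _ => (k : ℤ) - n) ?_ ?_ ?_ ?_
    · intro k hk; simp only [Finset.mem_range, Finset.mem_Icc] at *; omega
    · intro a _ b _ hab; simpa using hab
    · intro m hm
      simp only [Finset.mem_Icc] at hm
      exact ⟨(m + n).toNat, by simp only [Finset.mem_range]; omega, by omega⟩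
    · intros; rfl
  rw [← hS (Finset.Icc (-(n : ℤ)) n) (hB.trans (Finset.Icc_subset_Icc (by omega) (by omega))),
    hsum, finite_jtp h]
  have hqp : ∏ i ∈ range n, (1 + ((-1 : ℤ) : ℤ⟦X⟧) * X ^ (s + t + (s + t) * i)) =
      qp (X ^ (s + t)) n := by
    refine prod_congr rfl fun i _ => ?_
    push_cast; ring
  rw [hqp, ← sub_eq_zero, ← map_sub, sum_mul, ← sum_sub_distrib]
  refine (X_pow_dvd_iff (n := d + 1)).mp (dvd_sum fun k hk => ?_) d (by omega)
  have hk' : k ≤ 2 * n := by simpa [Nat.lt_succ_iff] using hk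
  have e : gb (X ^ (s + t)) (2 * n) k * th ε s t ((k : ℤ) - n) * qp (X ^ (s + t)) n -
      th ε s t ((k : ℤ) - n) =
      th ε s t ((k : ℤ) - n) * (gb (X ^ (s + t)) (2 * n) k * qp (X ^ (s + t)) n - 1) := by ring
  rw [e]
  by_cases hm : d + 1 ≤ ((k : ℤ) - n).natAbs
  · exact ((pow_dvd_pow X hm).trans (th_dvd hs ht _)).mul_right _
  · obtain ⟨l, hl⟩ := Nat.exists_eq_add_of_le hk'
    rw [hl]
    exact (gb_congr hc (by omega) (by omega) (by omega)).mul_left _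

lemma hasProd_b5 : HasProd (fun i : ℕ => if 5 ∣ (i + 1) then (1 : ℤ⟦X⟧) else 1 + X ^ (i + 1))
    (PowerSeries.mk fun n => (b5' n : ℤ)) := by
  convert! Nat.Partition.hasProd_genFun
    (fun i c ↦ if c < 2 ∧ ¬ 5 ∣ i then (1 : ℤ) else 0) using 1
  · ext1 i
    rw [tsum_eq_single 0 (fun j hj => by
      have : ¬ (j + 1 < 2) := by omega
      simp only [this, false_and, if_false]
      exact zero_smul ℤ _)]
    by_cases h : 5 ∣ i + 1
    · simp only [h, if_true, not_true, and_false, if_false]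
      exact (add_eq_left.mpr (zero_smul ℤ _)).symm
    · simp only [h, if_false, not_false_eq_true, and_true]
      rw [if_pos (by norm_num), zero_add, mul_one]
      exact congrArg (1 + ·) (one_smul ℤ _).symm
  · simp_rw [Nat.Partition.genFun, b5', ← Nat.Partition.countRestricted_two,
      Nat.Partition.countRestricted, filter_filter, card_filter, Finsupp.prod, prod_boole]
    ext n
    simp
    congr 1
    ext p
    simp only [Finset.mem_filter, Finset.mem_univ, true_and]
    constructor
    · rintro ⟨h1, h2⟩ i hi
      exact ⟨h1 i hi, h2 i hi⟩
    · intro h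
      exact ⟨fun i hi => (h i hi).1, fun i hi => (h i hi).2⟩

/-- generating function -/
noncomputable def G : ℤ⟦X⟧ := PowerSeries.mk fun n => (b5' n : ℤ)

lemma G_eq : G = Pr 1 1 5 * Pr 1 2 5 * Pr 1 3 5 * Pr 1 4 5 := by
  have h1 := hasProd_b5.tendsto_prod_nat.comp (tendsto_id.const_mul_atTop' (show 0 < 5 by norm_num))
  have h5 : 0 < 5 := by norm_num
  have h2 := (((tendsto_Pr 1 1 h5).mul (tendsto_Pr 1 2 h5)).mul (tendsto_Pr 1 3 h5)).mul
    (tendsto_Pr 1 4 h5)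
  refine tendsto_nhds_unique h1 (h2.congr fun n => ?_)
  simp only [Function.comp, id]
  induction n with
  | zero => simp
  | succ n ih =>
    simp only [prod_range_succ, show 5 * (n + 1) = 5 * n + 1 + 1 + 1 + 1 + 1 by ring]
    rw [← ih, if_neg (by omega), if_neg (by omega), if_neg (by omega), if_neg (by omega),
      if_pos (by omega)]
    push_cast
    ring

lemma Pr_split5 (ε : ℤ) (a : ℕ) {m : ℕ} (hm : 0 < m) :
    Pr ε a m = Pr ε a (5 * m) * Pr ε (a + m) (5 * m) * Pr ε (a + 2 * m) (5 * m)
      * Pr ε (a + 3 * m) (5 * m) * Pr ε (a + 4 * m) (5 * m) := by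
  have h1 := (tendsto_Pr ε a hm).comp (tendsto_id.const_mul_atTop' (show 0 < 5 by norm_num))
  have h5 : 0 < 5 * m := by omega
  have h2 := ((((tendsto_Pr ε a h5).mul (tendsto_Pr ε (a + m) h5)).mul
    (tendsto_Pr ε (a + 2 * m) h5)).mul (tendsto_Pr ε (a + 3 * m) h5)).mul
    (tendsto_Pr ε (a + 4 * m) h5)
  refine tendsto_nhds_unique h1 (h2.congr fun n => ?_)
  simp only [Function.comp, id]
  induction n with
  | zero => simp
  | succ n ih =>
    simp only [prod_range_succ, show 5 * (n + 1) = 5 * n + 1 + 1 + 1 + 1 + 1 by ring]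
    rw [← ih]
    ring

lemma G_mul : G * (Pr (-1) 1 10 * Pr (-1) 3 10 * Pr (-1) 7 10 * Pr (-1) 9 10) = 1 := by
  have n1 := Pr_mul_neg 1 (by norm_num) 1 (show 0 < 5 by norm_num)
  have n2 := Pr_mul_neg 1 (by norm_num) 2 (show 0 < 5 by norm_num)
  have n3 := Pr_mul_neg 1 (by norm_num) 3 (show 0 < 5 by norm_num)
  have n4 := Pr_mul_neg 1 (by norm_num) 4 (show 0 < 5 by norm_num)
  have s1 := Pr_split2 (-1) 1 (show 0 < 5 by norm_num)
  have s2 := Pr_split2 (-1) 2 (show 0 < 5 by norm_num)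
  have s3 := Pr_split2 (-1) 3 (show 0 < 5 by norm_num)
  have s4 := Pr_split2 (-1) 4 (show 0 < 5 by norm_num)
  norm_num at n1 n2 n3 n4 s1 s2 s3 s4
  have h2 := Pr_ne_zero (-1) (show 0 < 2 by norm_num) (show 0 < 10 by norm_num)
  have h4 := Pr_ne_zero (-1) (show 0 < 4 by norm_num) (show 0 < 10 by norm_num)
  have h6 := Pr_ne_zero (-1) (show 0 < 6 by norm_num) (show 0 < 10 by norm_num)
  have h8 := Pr_ne_zero (-1) (show 0 < 8 by norm_num) (show 0 < 10 by norm_num)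
  apply mul_left_cancel₀ (mul_ne_zero (mul_ne_zero h2 h4) (mul_ne_zero h6 h8))
  rw [G_eq]
  calc _ = (Pr 1 1 5 * (Pr (-1) 1 10 * Pr (-1) 6 10)) * (Pr 1 2 5 * (Pr (-1) 2 10 * Pr (-1) 7 10))
      * (Pr 1 3 5 * (Pr (-1) 3 10 * Pr (-1) 8 10)) * (Pr 1 4 5 * (Pr (-1) 4 10 * Pr (-1) 9 10)) := by
        ring
    _ = _ := by rw [← s1, ← s2, ← s3, ← s4, n1, n2, n3, n4]; ring

/-- Support in multiples of `c`. -/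
def Supp (c : ℕ) (f : ℤ⟦X⟧) : Prop := ∀ d, ¬ c ∣ d → coeff d f = 0

lemma Supp.mul {c : ℕ} {f g : ℤ⟦X⟧} (hf : Supp c f) (hg : Supp c g) : Supp c (f * g) := by
  intro d hd
  rw [coeff_mul]
  refine sum_eq_zero fun x hx => ?_
  rw [HasAntidiagonal.mem_antidiagonal] at hx
  by_cases h1 : c ∣ x.1
  · rw [hg x.2 (fun h2 => hd (hx ▸ dvd_add h1 h2)), mul_zero]
  · rw [hf x.1 h1, zero_mul]

lemma supp_Pr (ε : ℤ) (c a : ℕ) {m : ℕ} (ha : c ∣ a) (hm : 0 < m) (hc : c ∣ m) :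
    Supp c (Pr ε a m) := by
  have key : ∀ n, Supp c (∏ i ∈ range n, (1 + (ε : ℤ⟦X⟧) * X ^ (a + m * i))) := by
    intro n
    induction n with
    | zero =>
      intro d hd
      have : d ≠ 0 := by rintro rfl; simp at hd
      simp [coeff_one, this]
    | succ n ih =>
      rw [prod_range_succ]
      refine ih.mul ?_
      intro d hd
      have h0 : d ≠ 0 := by rintro rfl; simp at hd
      have h1 : d ≠ a + m * n := by
        rintro rfl; exact hd (dvd_add ha (hc.mul_right _))
      rw [← map_intCast (C (R := ℤ)) ε, map_add, coeff_C_mul, coeff_X_pow, coeff_one]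
      simp [h0, h1]
  intro d hd
  obtain ⟨n, hn⟩ := (eventually_of_tendsto (tendsto_Pr ε a hm) d).exists
  rw [← hn, key n d hd]

/-- The substitution `X ↦ -X`. -/
noncomputable def N : ℤ⟦X⟧ →+* ℤ⟦X⟧ := rescale (-1)

lemma coeff_N (d : ℕ) (f : ℤ⟦X⟧) : coeff d (N f) = (-1) ^ d * coeff d f := by
  simp [N, coeff_rescale]

lemma N_of_supp {f : ℤ⟦X⟧} (hf : Supp 2 f) : N f = f := by
  ext d
  rw [coeff_N]
  by_cases h : 2 ∣ d
  · rw [(even_iff_two_dvd.mpr h).neg_one_pow, one_mul]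
  · rw [hf d h, mul_zero]

lemma continuous_N : Continuous N := by
  rw [continuous_iff_continuousAt]
  intro f
  rw [ContinuousAt, WithPiTopology.tendsto_iff_coeff_tendsto]
  intro d
  simp only [coeff_N]
  exact ((WithPiTopology.continuous_coeff ℤ d).tendsto f).const_mul _

lemma coeff_tsum {ι : Type*} {f : ι → ℤ⟦X⟧} (hf : Summable f) (d : ℕ) :
    coeff d (∑' i, f i) = ∑' i, coeff d (f i) :=
  ((WithPiTopology.hasSum_iff_hasSum_coeff (R := ℤ)).mp hf.hasSum d).tsum_eq.symm

lemma summable_pair {s t s' t' : ℕ} (hs : 0 < s) (ht : 0 < t) (hs' : 0 < s') (ht' : 0 < t') :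
    Summable (fun x : ℤ × ℤ => th 1 s t x.1 * th 1 s' t' x.2) := by
  apply summable_of_le
  intro d
  refine ((finite_natAbs_le d).prod (finite_natAbs_le d)).subset fun x hx => ?_
  by_contra h
  apply hx
  have h' : d < x.1.natAbs + x.2.natAbs := by
    by_contra h2
    apply h
    simp only [Set.mem_prod, Set.mem_ofPred_eq]
    omega
  have hd : (X : ℤ⟦X⟧) ^ (x.1.natAbs + x.2.natAbs) ∣ th 1 s t x.1 * th 1 s' t' x.2 := by
    rw [pow_add]; exact mul_dvd_mul (th_dvd hs ht _) (th_dvd hs' ht' _)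
  exact X_pow_dvd_iff.mp hd d h'

lemma th_one (s t : ℕ) (m : ℤ) : th 1 s t m = X ^ ex s t m := by simp [th]

lemma tsum_pair {s t s' t' : ℕ} (hs : 0 < s) (ht : 0 < t) (hs' : 0 < s') (ht' : 0 < t') :
    (∑' m, th 1 s t m) * (∑' m, th 1 s' t' m) =
      ∑' x : ℤ × ℤ, X ^ (ex s t x.1 + ex s' t' x.2) := by
  rw [(summable_th 1 hs ht).tsum_mul_tsum (summable_th 1 hs' ht') (summable_pair hs ht hs' ht')]
  simp only [th_one, pow_add]

lemma summable_pair' {s t s' t' : ℕ} (hs : 0 < s) (ht : 0 < t) (hs' : 0 < s') (ht' : 0 < t') :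
    Summable (fun x : ℤ × ℤ => (X : ℤ⟦X⟧) ^ (ex s t x.1 + ex s' t' x.2)) := by
  simpa only [th_one, pow_add] using summable_pair hs ht hs' ht'

lemma N_X_pow (k : ℕ) : N (X ^ k) = (-1) ^ k * X ^ k := by
  have : N X = -X := by simp [N, rescale_X]
  rw [map_pow, this, neg_pow]

theorem dissect :
    (∑' m, th 1 9 1 m) * (∑' m, th 1 7 3 m) - N ((∑' m, th 1 9 1 m) * (∑' m, th 1 7 3 m)) =
      2 * X * ((∑' m, th 1 14 6 m) * (∑' m, th 1 18 2 m)) := by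
  rw [tsum_pair (by norm_num) (by norm_num) (by norm_num) (by norm_num),
    tsum_pair (by norm_num) (by norm_num) (by norm_num) (by norm_num)]
  have hs := summable_pair' (show 0 < 9 by norm_num) (show 0 < 1 by norm_num)
    (show 0 < 7 by norm_num) (show 0 < 3 by norm_num)
  have hs2 := summable_pair' (show 0 < 14 by norm_num) (show 0 < 6 by norm_num)
    (show 0 < 18 by norm_num) (show 0 < 2 by norm_num)
  have hN := hs.map N continuous_N
  rw [hs.map_tsum N continuous_N]
  have hsub := hs.tsum_sub hN
  simp only [Function.comp_def] at hsub
  rw [← hsub, ← hs2.tsum_mul_left]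
  let g : ℤ × ℤ → ℤ × ℤ := fun y => (-y.1 - y.2 - 1, y.2 - y.1)
  have hg : Function.Injective g := by
    rintro ⟨a, b⟩ ⟨c, d⟩ h
    simp only [g, Prod.mk.injEq] at h ⊢
    omega
  have hE : ∀ x : ℤ × ℤ, ((ex 9 1 x.1 + ex 7 3 x.2 : ℕ) : ℤ) =
      5 * x.1 ^ 2 + 4 * x.1 + 5 * x.2 ^ 2 + 2 * x.2 := by
    intro x
    have h1 := two_ex 9 1 x.1
    have h2 := two_ex 7 3 x.2
    push_cast at *
    linarith
  rw [← hg.tsum_eq]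
  · refine tsum_congr fun y => ?_
    have he : ex 9 1 (g y).1 + ex 7 3 (g y).2 = 2 * ((ex 9 1 (g y).1 + ex 7 3 (g y).2) / 2) + 1 ∧
        ex 9 1 (g y).1 + ex 7 3 (g y).2 = 1 + (ex 14 6 y.1 + ex 18 2 y.2) := by
      have h0 := hE (g y)
      have h1 := two_ex 14 6 y.1
      have h2 := two_ex 18 2 y.2
      have h3 : ex 9 1 (g y).1 + ex 7 3 (g y).2 = 1 + (ex 14 6 y.1 + ex 18 2 y.2) := by
        zify
        push_cast at h0 h1 h2
        rw [h0]
        simp only [g]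
        linarith
      refine ⟨?_, h3⟩
      have h4 : (ex 14 6 y.1 : ℤ) = 2 * (5 * y.1 ^ 2 + 2 * y.1) := by push_cast at h1; linarith
      have h5 : (ex 18 2 y.2 : ℤ) = 2 * (5 * y.2 ^ 2 + 4 * y.2) := by push_cast at h2; linarith
      omega
    rw [N_X_pow, Odd.neg_one_pow ⟨_, he.1⟩, he.2, pow_add]
    ring
  · intro x hx
    rw [Function.mem_support] at hx
    have hodd : ¬ Even (ex 9 1 x.1 + ex 7 3 x.2) := by
      intro he
      apply hx
      rw [N_X_pow, he.neg_one_pow, one_mul, sub_self]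
    have h0 := hE x
    have h1 : ¬ Even (x.1 + x.2) := by
      intro he
      apply hodd
      rw [← Int.even_coe_nat, h0]
      have : 5 * x.1 ^ 2 + 4 * x.1 + 5 * x.2 ^ 2 + 2 * x.2 =
        5 * ((x.1 + x.2) * (x.1 + x.2)) + 2 * (2 * x.1 + x.2 - 5 * (x.1 * x.2)) := by ring
      rw [this]
      exact ((he.mul_right _).mul_left _).add (even_two_mul _)
    rw [Int.not_even_iff_odd] at h1
    obtain ⟨k, hk⟩ := h1
    refine ⟨(-k - 1, k - x.1), ?_⟩
    simp only [g]
    ext <;> simp only <;> omega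

/-- odd part of `G` -/
noncomputable def Go : ℤ⟦X⟧ := PowerSeries.mk fun n => if Even n then 0 else (b5' n : ℤ)

lemma G_sub_N : G - N G = 2 * Go := by
  ext d
  have h2 : (2 : ℤ⟦X⟧) = C 2 := by simp
  rw [map_sub, coeff_N, h2, coeff_C_mul, G, Go, coeff_mk, coeff_mk]
  by_cases h : Even d
  · simp [h]
  · rw [(Nat.not_even_iff_odd.mp h).neg_one_pow, if_neg h]; ring

lemma Go_eq1 : Go * (Pr (-1) 2 20 * Pr (-1) 6 20 * Pr (-1) 14 20 * Pr (-1) 18 20) *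
    (Pr (-1) 10 20 * Pr (-1) 10 20) = X * (Pr 1 2 20 * Pr 1 6 20 * Pr 1 14 20 * Pr 1 18 20) := by
  have j1 := jtp (ε := 1) (by norm_num) (show 0 < 9 by norm_num) (show 0 < 1 by norm_num)
  have j2 := jtp (ε := 1) (by norm_num) (show 0 < 7 by norm_num) (show 0 < 3 by norm_num)
  have j3 := jtp (ε := 1) (by norm_num) (show 0 < 14 by norm_num) (show 0 < 6 by norm_num)
  have j4 := jtp (ε := 1) (by norm_num) (show 0 < 18 by norm_num) (show 0 < 2 by norm_num)
  have n1 := Pr_mul_neg 1 (by norm_num) 1 (show 0 < 10 by norm_num)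
  have n3 := Pr_mul_neg 1 (by norm_num) 3 (show 0 < 10 by norm_num)
  have n7 := Pr_mul_neg 1 (by norm_num) 7 (show 0 < 10 by norm_num)
  have n9 := Pr_mul_neg 1 (by norm_num) 9 (show 0 < 10 by norm_num)
  have s := Pr_split2 (-1) 10 (show 0 < 10 by norm_num)
  norm_num at j1 j2 j3 j4 n1 n3 n7 n9 s
  set K := Pr (-1) 2 20 * Pr (-1) 6 20 * Pr (-1) 14 20 * Pr (-1) 18 20 with hK
  set E := Pr (-1) 10 10 with hE
  have hT : G * (K * (E * E)) = (∑' m, th 1 9 1 m) * (∑' m, th 1 7 3 m) := by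
    rw [← j1, ← j2]
    have hKp : K = (Pr (-1) 1 10 * Pr (-1) 3 10 * Pr (-1) 7 10 * Pr (-1) 9 10) *
        (Pr 1 1 10 * Pr 1 3 10 * Pr 1 7 10 * Pr 1 9 10) := by
      rw [hK, ← n1, ← n3, ← n7, ← n9]; ring
    rw [hKp]
    linear_combination (Pr 1 1 10 * Pr 1 3 10 * Pr 1 7 10 * Pr 1 9 10 * E * E) * G_mul
  have hKs : N (K * (E * E)) = K * (E * E) := by
    apply N_of_supp
    have h10 : Supp 2 E := supp_Pr _ _ _ (by norm_num) (by norm_num) (by norm_num)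
    refine Supp.mul (Supp.mul (Supp.mul (Supp.mul ?_ ?_) ?_) ?_) (h10.mul h10) <;>
      exact supp_Pr _ _ _ (by norm_num) (by norm_num) (by norm_num)
  have hd := dissect
  rw [← hT, map_mul, hKs, ← j3, ← j4] at hd
  have hG := G_sub_N
  have f20 := Pr_ne_zero (-1) (show 0 < 20 by norm_num) (show 0 < 20 by norm_num)
  have h2 : (2 : ℤ⟦X⟧) ≠ 0 := by
    have e : (2 : ℤ⟦X⟧) = C 2 := by simp
    rw [e]
    exact (map_ne_zero_iff C C_injective).mpr (by norm_num)
  apply mul_left_cancel₀ (mul_ne_zero h2 (mul_ne_zero f20 f20))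
  rw [s] at hd
  linear_combination hd - K * (Pr (-1) 10 20 * Pr (-1) 20 20) * (Pr (-1) 10 20 * Pr (-1) 20 20) * hG

lemma Go_eq2 : Go * (∑' m, th (-1) 4 4 m) = X * (∑' m, th 1 2 2 m) * Pr 1 20 20 := by
  have j1 := jtp (ε := 1) (by norm_num) (show 0 < 2 by norm_num) (show 0 < 2 by norm_num)
  have j2 := jtp (ε := -1) (by norm_num) (show 0 < 4 by norm_num) (show 0 < 4 by norm_num)
  have n10 := Pr_mul_neg 1 (by norm_num) 10 (show 0 < 20 by norm_num)
  have n2 := Pr_mul_neg 1 (by norm_num) 2 (show 0 < 4 by norm_num)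
  have n20 := Pr_mul_neg 1 (by norm_num) 20 (show 0 < 20 by norm_num)
  have s20 := Pr_split2 (-1) 20 (show 0 < 20 by norm_num)
  have s4 := Pr_split2 (-1) 4 (show 0 < 4 by norm_num)
  have u := Pr_split5 1 2 (show 0 < 4 by norm_num)
  have v := Pr_split5 (-1) 2 (show 0 < 4 by norm_num)
  norm_num at j1 j2 n10 n2 n20 s20 s4 u v
  have h1 := Go_eq1
  rw [← j1, ← j2]
  have hW : Pr 1 20 20 * Pr (-1) 20 40 = 1 := by
    have f40 := Pr_ne_zero (-1) (show 0 < 40 by norm_num) (show 0 < 40 by norm_num)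
    apply mul_right_cancel₀ f40
    linear_combination n20 - Pr 1 20 20 * s20
  have e1 : Go * Pr (-1) 2 4 * Pr (-1) 20 40 = X * Pr 1 2 4 := by
    rw [← n10, u, v]
    linear_combination Pr 1 10 20 * h1
  have e2 : Go * Pr (-1) 2 4 = X * Pr 1 2 4 * Pr 1 20 20 := by
    linear_combination Pr 1 20 20 * e1 - Go * Pr (-1) 2 4 * hW
  linear_combination Pr 1 2 4 * Pr (-1) 4 4 * e2 - Go * Pr (-1) 4 8 * s4 - Go * Pr (-1) 4 4 * n2

lemma theta_two {ε : ℤ} {s : ℕ} (hs : 0 < s) : ∃ A : ℤ⟦X⟧, ∑' m, th ε s s m = 1 + 2 * A ∧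
    ∀ d, coeff d A ≠ 0 → ∃ k : ℕ, d = s * k ^ 2 := by
  have hex : ∀ m : ℤ, (ex s s m : ℤ) = s * m ^ 2 := by
    intro m
    have := two_ex s s m
    linarith
  have hsum := summable_th ε hs hs
  have hneg : ∀ m : ℤ, th ε s s (-m) = th ε s s m := by
    intro m
    have : ex s s (-m) = ex s s m := by zify; rw [hex, hex]; ring
    rw [th, th, this, Int.natAbs_neg]
  have hinj : Function.Injective (fun n : ℕ => (n : ℤ) + 1) := by
    intro a b h; simpa using h
  have h1 : Summable (fun n : ℕ => th ε s s ((n : ℤ) + 1)) := hsum.comp_injective hinj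
  have h2 : Summable (fun n : ℕ => th ε s s (-((n : ℤ) + 1))) := by simpa only [hneg] using h1
  refine ⟨∑' n : ℕ, th ε s s ((n : ℤ) + 1), ?_, ?_⟩
  · rw [tsum_of_add_one_of_neg_add_one h1 h2]
    simp only [hneg]
    have : th ε s s 0 = 1 := by
      have : ex s s 0 = 0 := by zify; rw [hex]; ring
      rw [th, this]; simp
    rw [this]; ring
  · intro d hd
    by_contra hne
    push Not at hne
    apply hd
    rw [coeff_tsum h1]
    refine (tsum_congr fun n => ?_).trans tsum_zero
    have hn := hne (n + 1)
    have : ex s s ((n : ℤ) + 1) = s * (n + 1) ^ 2 := by zify; rw [hex]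
    rw [th, this, ← map_intCast (C (R := ℤ)), coeff_C_mul, coeff_X_pow, if_neg hn, mul_zero]

lemma F_mod_two (j : ℕ) (hj : j % 100 = 80) : (2 : ℤ) ∣ coeff j (Pr 1 20 20) := by
  have hz : coeff j (Pr (-1) 20 20) = 0 := by
    have s := Pr_split3 (-1) 20 (show 0 < 20 by norm_num)
    have j1 := jtp (ε := -1) (by norm_num) (show 0 < 40 by norm_num) (show 0 < 20 by norm_num)
    norm_num at s j1
    have e : Pr (-1) 20 20 = ∑' m, th (-1) 40 20 m := by rw [s, ← j1]; ring
    rw [e, coeff_tsum (summable_th _ (by norm_num) (by norm_num))]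
    refine (tsum_congr fun m => ?_).trans tsum_zero
    have hne : j ≠ ex 40 20 m := by
      intro h
      have h2 := two_ex 40 20 m
      rw [← h] at h2
      push_cast at h2
      have h3 : (j : ℤ) = 10 * (3 * m ^ 2 + m) := by linarith
      have h4 : (3 * m ^ 2 + m) % 5 = 3 := by omega
      have h5 : m % 5 = 0 ∨ m % 5 = 1 ∨ m % 5 = 2 ∨ m % 5 = 3 ∨ m % 5 = 4 := by omega
      rcases h5 with h5 | h5 | h5 | h5 | h5 <;>
        simp [Int.add_emod, Int.mul_emod, pow_two, h5] at h4
    rw [th, ← map_intCast (C (R := ℤ)), coeff_C_mul, coeff_X_pow, if_neg hne, mul_zero]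
  have hfin : ∀ n, (C (2 : ℤ) : ℤ⟦X⟧) ∣ (∏ i ∈ range n, (1 + ((1 : ℤ) : ℤ⟦X⟧) * X ^ (20 + 20 * i))) -
      ∏ i ∈ range n, (1 + ((-1 : ℤ) : ℤ⟦X⟧) * X ^ (20 + 20 * i)) := by
    intro n
    induction n with
    | zero => simp
    | succ n ih =>
      obtain ⟨c, hc⟩ := ih
      rw [prod_range_succ, prod_range_succ]
      refine ⟨c * (1 + X ^ (20 + 20 * n)) +
        (∏ i ∈ range n, (1 + ((-1 : ℤ) : ℤ⟦X⟧) * X ^ (20 + 20 * i))) * X ^ (20 + 20 * n), ?_⟩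
      have h2 : (C (2 : ℤ) : ℤ⟦X⟧) = 2 := by simp
      rw [h2] at hc ⊢
      push_cast at hc ⊢
      linear_combination (1 + X ^ (20 + 20 * n)) * hc
  have hp := eventually_of_tendsto (tendsto_Pr 1 20 (show 0 < 20 by norm_num)) j
  have hm := eventually_of_tendsto (tendsto_Pr (-1) 20 (show 0 < 20 by norm_num)) j
  obtain ⟨n, h1, h2⟩ := (hp.and hm).exists
  obtain ⟨c, hc⟩ := hfin n
  have := congrArg (coeff j) hc
  rw [map_sub, h1, h2, hz, coeff_C_mul, sub_zero] at this
  exact ⟨_, this⟩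

lemma mod_ten (k : ℕ) (h : k ^ 2 % 10 = 5) : k % 10 = 5 := by
  rw [Nat.pow_mod] at h
  have h7 : k % 10 < 10 := Nat.mod_lt _ (by norm_num)
  generalize k % 10 = r at *
  interval_cases r <;> first | rfl | (exfalso; revert h; decide)

end B5

theorem b5'_100n31_mod4 (n : ℕ) : b5' (100 * n + 31) ≡ 0 [MOD 4] := by
  obtain ⟨A, hA, hA'⟩ := B5.theta_two (ε := 1) (s := 2) (by norm_num)
  obtain ⟨B, hB, hB'⟩ := B5.theta_two (ε := -1) (s := 4) (by norm_num)
  have h := B5.Go_eq2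
  rw [hA, hB] at h
  set F := B5.Pr 1 20 20 with hF
  have hFs : B5.Supp 20 F := B5.supp_Pr _ _ _ (by norm_num) (by norm_num) (by norm_num)
  have h2 : (C (2 : ℤ) : ℤ⟦X⟧) = 2 := by simp
  have h4 : (C (4 : ℤ) : ℤ⟦X⟧) = 4 := by simp
  have key : B5.Go = X * (F + C 2 * (A * F) - C 2 * (B * F)) + C 4 * (B * B * B5.Go - X * B * A * F) := by
    rw [h2, h4]
    linear_combination (1 - 2 * B) * h
  have hc := congrArg (coeff (100 * n + 31)) key
  have hodd : ¬ Even (100 * n + 31) := by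
    rw [Nat.not_even_iff_odd]; exact ⟨50 * n + 15, by ring⟩
  rw [B5.Go, coeff_mk, if_neg hodd, ← B5.Go, map_add, show 100 * n + 31 = (100 * n + 30) + 1 by ring,
    coeff_succ_X_mul, map_sub, map_add, coeff_C_mul, coeff_C_mul, coeff_C_mul,
    hFs (100 * n + 30) (by omega)] at hc
  have hBF : coeff (100 * n + 30) (B * F) = 0 := by
    rw [coeff_mul]
    refine sum_eq_zero fun x hx => ?_
    rw [HasAntidiagonal.mem_antidiagonal] at hx
    by_cases hb : coeff x.1 B = 0
    · rw [hb, zero_mul]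
    · obtain ⟨k, hk⟩ := hB' _ hb
      rw [hFs x.2 (by omega), mul_zero]
  have hAF : (2 : ℤ) ∣ coeff (100 * n + 30) (A * F) := by
    rw [coeff_mul]
    refine dvd_sum fun x hx => ?_
    rw [HasAntidiagonal.mem_antidiagonal] at hx
    by_cases ha : coeff x.1 A = 0
    · rw [ha, zero_mul]; exact dvd_zero _
    · obtain ⟨k, hk⟩ := hA' _ ha
      by_cases hd : 20 ∣ x.2
      · refine (B5.F_mod_two x.2 ?_).mul_left _
        have h5 : k ^ 2 % 10 = 5 := by omega
        have h6 : k % 10 = 5 := by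
          exact B5.mod_ten k h5
        obtain ⟨l, hl⟩ : ∃ l, k = 10 * l + 5 := ⟨k / 10, by omega⟩
        have h8 : k ^ 2 = 100 * (l * l + l) + 25 := by rw [hl]; ring
        omega
      · rw [hFs x.2 hd, mul_zero]; exact dvd_zero _
  rw [hBF] at hc
  rw [Nat.modEq_zero_iff_dvd]
  zify
  obtain ⟨c, hc'⟩ := hAF
  rw [hc'] at hc
  push_cast at hc
  rw [show 100 * n + 31 = (100 * n + 30) + 1 by ring]
  refine ⟨c + coeff (100 * n + 30 + 1) (B * B * B5.Go - X * B * A * F), ?_⟩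
  rw [hc]; ring
end

section
/- For all nonnegative integers n and α, one has b'₅(5n+1) ≡ b'₅(5^(2α+1)·n + (5^(2α+1)+1)/6) (mod 5). (Note that 5^(2α+1)+1 is divisible by 6.) -/
namespace B5Aux
open PowerSeries Filter Topology
open scoped PowerSeries.WithPiTopology

instance fact5 : Fact (Nat.Prime 5) := ⟨by norm_num⟩

/-- The substitution `X ↦ X ^ 5`. -/
noncomputable abbrev E : (ZMod 5)⟦X⟧ →ₐ[ZMod 5] (ZMod 5)⟦X⟧ := expand 5 (by norm_num)

/-- Extraction of the coefficients with index `5 n + r`. -/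
noncomputable def U (r : ℕ) (F : (ZMod 5)⟦X⟧) : (ZMod 5)⟦X⟧ := mk fun n => coeff (5 * n + r) F

lemma E_eq_pow (F : (ZMod 5)⟦X⟧) : E F = F ^ 5 := by
  have h := MvPowerSeries.map_frobenius_expand (R := ZMod 5) (σ := Unit) 5 (by norm_num) (f := F)
  rw [ZMod.frobenius_zmod] at h
  simp only [MvPowerSeries.map_id, RingHom.id_apply] at h
  exact h

lemma coeff_X_pow_mul_E (i : ℕ) (hi : i < 5) (c : (ZMod 5)⟦X⟧) (n r : ℕ) (hr : r < 5) :
    coeff (5 * n + r) (X ^ i * E c) = if i = r then coeff n c else 0 := by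
  rw [coeff_X_pow_mul']
  split_ifs with h1 h2 h2
  · subst h2
    rw [Nat.add_sub_cancel, coeff_expand_mul]
  · rw [coeff_expand_of_not_dvd]
    omega
  · omega
  · rfl

lemma U_of_decomp {F c0 c1 c2 c3 c4 : (ZMod 5)⟦X⟧}
    (h : F = E c0 + X * E c1 + X ^ 2 * E c2 + X ^ 3 * E c3 + X ^ 4 * E c4) :
    U 0 F = c0 ∧ U 1 F = c1 ∧ U 2 F = c2 ∧ U 3 F = c3 ∧ U 4 F = c4 := by
  have h' : F = X ^ 0 * E c0 + X ^ 1 * E c1 + X ^ 2 * E c2 + X ^ 3 * E c3 + X ^ 4 * E c4 := by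
    rw [h]; ring
  refine ⟨?_, ?_, ?_, ?_, ?_⟩ <;> ext n <;> rw [U, coeff_mk, h'] <;> simp only [map_add] <;>
    rw [coeff_X_pow_mul_E, coeff_X_pow_mul_E, coeff_X_pow_mul_E, coeff_X_pow_mul_E,
      coeff_X_pow_mul_E] <;> simp

lemma decomp (F : (ZMod 5)⟦X⟧) :
    F = E (U 0 F) + X * E (U 1 F) + X ^ 2 * E (U 2 F) + X ^ 3 * E (U 3 F) + X ^ 4 * E (U 4 F) := by
  have : F = X ^ 0 * E (U 0 F) + X ^ 1 * E (U 1 F) + X ^ 2 * E (U 2 F) + X ^ 3 * E (U 3 F)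
      + X ^ 4 * E (U 4 F) := by
    ext N
    obtain ⟨n, r, hr, rfl⟩ : ∃ n r, r < 5 ∧ N = 5 * n + r :=
      ⟨N / 5, N % 5, Nat.mod_lt _ (by norm_num), by omega⟩
    simp only [map_add]
    rw [coeff_X_pow_mul_E _ (by norm_num) _ _ _ hr, coeff_X_pow_mul_E _ (by norm_num) _ _ _ hr,
      coeff_X_pow_mul_E _ (by norm_num) _ _ _ hr, coeff_X_pow_mul_E _ (by norm_num) _ _ _ hr,
      coeff_X_pow_mul_E _ (by norm_num) _ _ _ hr]
    interval_cases r <;> simp [U]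
  linear_combination this

lemma U_pow_mul (c F : (ZMod 5)⟦X⟧) :
    U 0 (c ^ 5 * F) = c * U 0 F ∧ U 1 (c ^ 5 * F) = c * U 1 F ∧ U 2 (c ^ 5 * F) = c * U 2 F ∧
    U 3 (c ^ 5 * F) = c * U 3 F ∧ U 4 (c ^ 5 * F) = c * U 4 F := by
  apply U_of_decomp
  simp only [map_mul]
  rw [← E_eq_pow]
  linear_combination E c * decomp F

lemma cube_inj {P Q : (ZMod 5)⟦X⟧} (hP : constantCoeff P = 1) (hQ : constantCoeff Q = 1)
    (h : P ^ 3 = Q ^ 3) : P = Q := by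
  have h1 : (P - Q) * (P ^ 2 + P * Q + Q ^ 2) = 0 := by linear_combination h
  rcases mul_eq_zero.mp h1 with h2 | h2
  · exact sub_eq_zero.mp h2
  · have := congrArg constantCoeff h2
    simp [hP, hQ] at this
    exact absurd this (by decide)

/-- Euler's function. -/
noncomputable abbrev f : (ZMod 5)⟦X⟧ := pentagonalSeries (ZMod 5)
/-- Euler's function at `X ^ 2`. -/
noncomputable abbrev g : (ZMod 5)⟦X⟧ := expand 2 (by norm_num) f

/-- Gauss's theta series. -/
noncomputable def φ : (ZMod 5)⟦X⟧ :=
  mk fun N => if IsSquare N then (if N = 0 then 1 else 2 * (-1) ^ N) else 0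

lemma pent_mod (k : ℤ) : 2 * (pentagonal k : ℤ) = k * (3 * k - 1) := two_mul_natCast_pentagonal k

lemma f_vanish (r : ℕ) (hr : r = 3 ∨ r = 4) : U r f = 0 := by
  ext n
  rw [U, coeff_mk, map_zero, coeff_pentagonalSeries_eq_zero]
  rintro ⟨k, hk⟩
  have h := pent_mod k
  rw [hk] at h
  obtain ⟨m, s, hs, hs', rfl⟩ : ∃ m s : ℤ, 0 ≤ s ∧ s < 5 ∧ k = 5 * m + s :=
    ⟨k / 5, k % 5, by omega, by omega, by omega⟩
  push_cast at h
  have h' : 2 * (r : ℤ) - s * (3 * s - 1) = 5 * (m * (15 * m + 6 * s - 1) - 2 * n) := by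
    linear_combination h
  generalize m * (15 * m + 6 * s - 1) - 2 * n = z at h'
  rcases hr with rfl | rfl <;> interval_cases s <;> push_cast at h' <;> omega

lemma f_one : U 1 f = - E f := by
  ext n
  rw [U, coeff_mk, map_neg, coeff_expand]
  by_cases hm : ∃ m : ℤ, n = 5 * pentagonal (-m)
  · obtain ⟨m, rfl⟩ := hm
    have h : 5 * (5 * pentagonal (-m)) + 1 = pentagonal (5 * m + 1) := by
      have h1 := pent_mod (-m)
      have h2 := pent_mod (5 * m + 1)
      zify
      linarith
    rw [h, coeff_pentagonalSeries_pentagonal, if_pos (Dvd.intro _ rfl),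
      Nat.mul_div_cancel_left _ (by norm_num), coeff_pentagonalSeries_pentagonal]
    have e : Int.negOnePow (5 * m + 1) = - Int.negOnePow (-m) := by
      rw [Int.negOnePow_neg, Int.negOnePow_succ, show 5 * m = m + 2 * (2 * m) by ring,
        Int.negOnePow_add, Int.negOnePow_two_mul, mul_one]
    rw [e]
    simp
  · have hR : (if 5 ∣ n then coeff (n / 5) f else 0) = 0 := by
      split_ifs with h
      · rw [coeff_pentagonalSeries_eq_zero]
        rintro ⟨k, hk⟩
        exact hm ⟨-k, by rw [neg_neg]; omega⟩
      · rfl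
    rw [hR, neg_zero, coeff_pentagonalSeries_eq_zero]
    rintro ⟨k, hk⟩
    have h := pent_mod k
    rw [hk] at h
    obtain ⟨m, s, hs, hs', rfl⟩ : ∃ m s : ℤ, 0 ≤ s ∧ s < 5 ∧ k = 5 * m + s :=
      ⟨k / 5, k % 5, by omega, by omega, by omega⟩
    push_cast at h
    have h' : 2 * (1 : ℤ) - s * (3 * s - 1) = 5 * (m * (15 * m + 6 * s - 1) - 2 * n) := by
      linear_combination h
    have hs1 : s = 1 := by
      generalize m * (15 * m + 6 * s - 1) - 2 * n = z at h'
      interval_cases s <;> push_cast at h' <;> omega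
    subst hs1
    apply hm
    refine ⟨m, ?_⟩
    have h1 := pent_mod (-m)
    zify
    linarith

lemma φ_vanish (r : ℕ) (hr : r = 2 ∨ r = 3) : U r φ = 0 := by
  ext n
  rw [U, coeff_mk, φ, coeff_mk, map_zero, if_neg]
  rintro ⟨k, hk⟩
  have h : (k * k) % 5 = r := by omega
  rw [Nat.mul_mod] at h
  have : k % 5 < 5 := Nat.mod_lt _ (by norm_num)
  generalize k % 5 = s at *
  interval_cases s <;> omega

lemma φ_zero : U 0 φ = E φ := by
  ext n
  rw [U, coeff_mk, coeff_expand, φ, coeff_mk, add_zero]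
  by_cases h5 : 5 ∣ n
  · obtain ⟨n, rfl⟩ := h5
    rw [if_pos (Dvd.intro _ rfl), Nat.mul_div_cancel_left _ (by norm_num), coeff_mk]
    have e1 : IsSquare (5 * (5 * n)) ↔ IsSquare n := by
      constructor
      · rintro ⟨k, hk⟩
        have : 5 ∣ k := by
          have : 5 ∣ k * k := by rw [← hk]; exact Dvd.intro _ rfl
          rcases (Nat.Prime.dvd_mul (by norm_num)).mp this with h | h <;> exact h
        obtain ⟨j, rfl⟩ := this
        exact ⟨j, by nlinarith⟩
      · rintro ⟨k, rfl⟩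
        exact ⟨5 * k, by ring⟩
    have e2 : (-1 : ZMod 5) ^ (5 * (5 * n)) = (-1) ^ n := by
      rw [← mul_assoc, pow_mul]; norm_num
    simp only [e1, e2]
    simp
  · rw [if_neg h5, if_neg]
    rintro ⟨k, hk⟩
    have : 5 ∣ k := by
      have : 5 ∣ k * k := by rw [← hk]; exact Dvd.intro _ rfl
      rcases (Nat.Prime.dvd_mul (by norm_num)).mp this with h | h <;> exact h
    obtain ⟨j, rfl⟩ := this
    exact h5 ⟨j * j, by nlinarith⟩


/-- Finite form of Gauss's identity. -/
lemma gauss_finite {R : Type*} [CommRing R] (q : R) (n : ℕ) :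
    (∏ i ∈ Finset.range n, (1 + q ^ (i + 1))) *
      (1 + 2 * ∑ k ∈ Finset.range n, (-1) ^ (k + 1) * q ^ ((k + 1) ^ 2)) =
    (∏ i ∈ Finset.range n, (1 - q ^ (i + 1))) +
      2 * ∑ s ∈ Finset.range n, (-1) ^ (s + 1) * q ^ ((s + 1) * (n + 1)) *
        (∏ i ∈ Finset.Ico (s + 1) n, (1 - q ^ (i + 1))) *
        ∏ i ∈ Finset.range s, (1 + q ^ (i + 1)) := by
  induction n with
  | zero => simp
  | succ n ih =>
    have tel : ∑ s ∈ Finset.range n,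
        (((-1) ^ (s + 1) * q ^ ((s + 1) * (n + 1 + 1)) *
          (∏ i ∈ Finset.Ico (s + 1) (n + 1), (1 - q ^ (i + 1))) *
          ∏ i ∈ Finset.range s, (1 + q ^ (i + 1)))
        - (1 + q ^ (n + 1)) * ((-1) ^ (s + 1) * q ^ ((s + 1) * (n + 1)) *
          (∏ i ∈ Finset.Ico (s + 1) n, (1 - q ^ (i + 1))) *
          ∏ i ∈ Finset.range s, (1 + q ^ (i + 1))))
      = q ^ (n + 1) * (∏ i ∈ Finset.range n, (1 - q ^ (i + 1)))
        - (-1) ^ n * q ^ ((n + 1) * (n + 1)) * ∏ i ∈ Finset.range n, (1 + q ^ (i + 1)) := by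
      have h : ∀ s ∈ Finset.range n,
        (((-1) ^ (s + 1) * q ^ ((s + 1) * (n + 1 + 1)) *
          (∏ i ∈ Finset.Ico (s + 1) (n + 1), (1 - q ^ (i + 1))) *
          ∏ i ∈ Finset.range s, (1 + q ^ (i + 1)))
        - (1 + q ^ (n + 1)) * ((-1) ^ (s + 1) * q ^ ((s + 1) * (n + 1)) *
          (∏ i ∈ Finset.Ico (s + 1) n, (1 - q ^ (i + 1))) *
          ∏ i ∈ Finset.range s, (1 + q ^ (i + 1)))) =
        ((-1) ^ s * q ^ ((n + 1) * (s + 1)) * (∏ i ∈ Finset.Ico s n, (1 - q ^ (i + 1))) *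
          ∏ i ∈ Finset.range s, (1 + q ^ (i + 1))) -
        ((-1) ^ (s + 1) * q ^ ((n + 1) * (s + 1 + 1)) *
          (∏ i ∈ Finset.Ico (s + 1) n, (1 - q ^ (i + 1))) *
          ∏ i ∈ Finset.range (s + 1), (1 + q ^ (i + 1))) := by
        intro s hs
        have hs' := Finset.mem_range.mp hs
        rw [Finset.prod_Ico_succ_top (by omega), Finset.prod_eq_prod_Ico_succ_bot hs',
          Finset.prod_range_succ]
        ring
      rw [Finset.sum_congr rfl h, Finset.sum_range_sub']
      simp
    rw [Finset.sum_sub_distrib, ← Finset.mul_sum] at tel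
    rw [Finset.prod_range_succ, Finset.sum_range_succ, Finset.prod_range_succ,
      Finset.sum_range_succ (n := n)]
    simp only [Finset.Ico_self, Finset.prod_empty]
    linear_combination (1 + q ^ (n + 1)) * ih - 2 * tel

/-- Generating function of partitions into distinct parts. -/
noncomputable def D : (ZMod 5)⟦X⟧ := Nat.Partition.genFun fun _ c => if c < 2 then 1 else 0

/-- Generating function of `b5'`. -/
noncomputable def B : (ZMod 5)⟦X⟧ := mk fun n => (b5' n : ZMod 5)

lemma hasProd_D : HasProd (fun i : ℕ => (1 + X ^ (i + 1) : (ZMod 5)⟦X⟧)) D := by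
  convert! Nat.Partition.hasProd_genFun (R := ZMod 5) (fun _ c => if c < 2 then 1 else 0) using 1
  ext1 i
  rw [tsum_eq_single 0]
  · simp
  · intro j hj
    simp [hj]

lemma hasProd_B : HasProd (fun i : ℕ => if 5 ∣ i + 1 then 1 else (1 + X ^ (i + 1) : (ZMod 5)⟦X⟧)) B := by
  convert! Nat.Partition.hasProd_genFun (R := ZMod 5)
    (fun i c => if c < 2 ∧ ¬ 5 ∣ i then 1 else 0) using 1
  · ext1 i
    rw [tsum_eq_single 0]
    · by_cases h : 5 ∣ i + 1 <;> simp [h]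
    · intro j hj
      simp [hj]
  · ext n
    rw [B, coeff_mk, Nat.Partition.coeff_genFun, b5', ← Nat.Partition.countRestricted_two,
      Nat.Partition.countRestricted, Finset.filter_filter, Finset.card_filter]
    simp_rw [Finsupp.prod, Finset.prod_boole]
    push_cast
    refine Finset.sum_congr rfl fun p _ => ?_
    congr 1
    simp only [Multiset.toFinsupp_support, Multiset.mem_toFinset, Multiset.toFinsupp_apply,
      eq_iff_iff]
    exact ⟨fun h i hi => ⟨h.1 i hi, h.2 i hi⟩, fun h => ⟨fun i hi => (h i hi).1,
      fun i hi => (h i hi).2⟩⟩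

lemma D_pow : B * D ^ 5 = D := by
  have h5 : HasProd (fun i : ℕ => (1 + X ^ (5 * i + 4 + 1) : (ZMod 5)⟦X⟧)) (D ^ 5) := by
    have := hasProd_D.pow 5
    convert this using 2 with i
    rw [← E_eq_pow]
    simp only [map_add, map_one, map_pow, expand_X]
    rw [← pow_mul]
    congr 2
  have hinj : Function.Injective (fun i : ℕ => 5 * i + 4) := fun a b h => by
    simp at h; exact h
  have h5' : HasProd (fun i : ℕ => if 5 ∣ i + 1 then (1 + X ^ (i + 1) : (ZMod 5)⟦X⟧) else 1)
      (D ^ 5) := by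
    rw [← hinj.hasProd_iff]
    · convert h5 using 2 with i
      simp only [Function.comp]
      rw [if_pos (by omega)]
    · intro i hi
      rw [if_neg]
      intro h
      exact hi ⟨i / 5, by simp; omega⟩
  have := hasProd_B.mul h5'
  refine this.unique ?_
  convert hasProd_D using 2 with i
  split_ifs <;> simp

lemma D_mul_f : D * f = g := by
  have h := hasProd_D.mul (WithPiTopology.hasProd_one_sub_X_pow (ZMod 5))
  refine h.unique ?_
  rw [HasProd, WithPiTopology.tendsto_iff_coeff_tendsto]
  intro N
  have e : ∀ s : Finset ℕ, ∏ i ∈ s, ((1 + X ^ (i + 1)) * (1 - X ^ (i + 1)) : (ZMod 5)⟦X⟧) =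
      expand 2 (by norm_num) (∏ i ∈ s, (1 - X ^ (i + 1) : (ZMod 5)⟦X⟧)) := by
    intro s
    rw [map_prod]
    refine Finset.prod_congr rfl fun i _ => ?_
    simp only [map_sub, map_one, map_pow, expand_X]
    ring
  apply tendsto_nhds_of_eventually_eq
  filter_upwards [coeff_prod_one_sub_X_pow_eventually_eq (ZMod 5) (N / 2)] with s hs
  rw [e, coeff_expand, coeff_expand, hs]

lemma D_mul_φ : D * φ = f := by
  have hD := hasProd_D.tendsto_prod_nat
  have hf := (WithPiTopology.hasProd_one_sub_X_pow (ZMod 5)).tendsto_prod_nat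
  have hφ : Tendsto (fun n => (1 + 2 * ∑ k ∈ Finset.range n, (-1) ^ (k + 1) * X ^ ((k + 1) ^ 2) :
      (ZMod 5)⟦X⟧)) atTop (𝓝 φ) := by
    rw [WithPiTopology.tendsto_iff_coeff_tendsto]
    intro N
    apply tendsto_nhds_of_eventually_eq
    filter_upwards [eventually_ge_atTop N] with n hn
    have e : (2 : (ZMod 5)⟦X⟧) = C 2 := (map_ofNat C 2).symm
    have e1 : ∀ k : ℕ, ((-1) ^ k : (ZMod 5)⟦X⟧) = C ((-1) ^ k) := by simp
    rw [e, map_add, coeff_C_mul, map_sum]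
    simp_rw [e1, coeff_C_mul, coeff_X_pow, φ, coeff_mk, coeff_one]
    split_ifs with h0 h1 h1
    · subst h0
      rw [Finset.sum_eq_zero (fun j _ => by rw [if_neg (by positivity), mul_zero])]
      simp
    · subst h0; exact absurd ⟨0, rfl⟩ h1
    · obtain ⟨k, rfl⟩ := h1
      have hk : k ≠ 0 := by rintro rfl; simp at h0
      obtain ⟨k, rfl⟩ := Nat.exists_eq_succ_of_ne_zero hk
      rw [Finset.sum_eq_single k]
      · rw [if_pos (by simp; ring)]
        simp [pow_mul]
        left
        rcases Nat.even_or_odd (k + 1) with h | h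
        · rw [h.neg_one_pow]; simp
        · rw [h.neg_one_pow, h.neg_one_pow]
      · intro j _ hj
        rw [if_neg, mul_zero]
        intro h
        apply hj
        have : (k + 1) ^ 2 = (j + 1) ^ 2 := by rw [← h]; simp; ring
        have := Nat.pow_left_injective (n := 2) (by norm_num) this
        omega
      · intro hk
        exfalso
        apply hk
        rw [Finset.mem_range]
        simp at hn
        nlinarith
    · rw [Finset.sum_eq_zero]
      · simp
      · intro j _
        rw [if_neg, mul_zero]
        rintro rfl
        exact h1 ⟨j + 1, by ring⟩
  have h0 : Tendsto (fun n => (2 * ∑ s ∈ Finset.range n, (-1) ^ (s + 1) * X ^ ((s + 1) * (n + 1)) *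
        (∏ i ∈ Finset.Ico (s + 1) n, (1 - X ^ (i + 1))) *
        ∏ i ∈ Finset.range s, (1 + X ^ (i + 1)) : (ZMod 5)⟦X⟧)) atTop (𝓝 0) := by
    rw [WithPiTopology.tendsto_iff_coeff_tendsto]
    intro N
    apply tendsto_nhds_of_eventually_eq
    filter_upwards [eventually_ge_atTop N] with n hn
    have hd : (X : (ZMod 5)⟦X⟧) ^ (n + 1) ∣
        (2 * ∑ s ∈ Finset.range n, (-1) ^ (s + 1) * X ^ ((s + 1) * (n + 1)) *
        (∏ i ∈ Finset.Ico (s + 1) n, (1 - X ^ (i + 1))) *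
        ∏ i ∈ Finset.range s, (1 + X ^ (i + 1)) : (ZMod 5)⟦X⟧) := by
      apply Dvd.dvd.mul_left
      apply Finset.dvd_sum
      intro s _
      apply Dvd.dvd.mul_right
      apply Dvd.dvd.mul_right
      apply Dvd.dvd.mul_left
      exact pow_dvd_pow _ (by nlinarith)
    rw [X_pow_dvd_iff] at hd
    rw [hd N (by omega), map_zero]
  have h1 := hD.mul hφ
  have h2 := hf.add h0
  rw [add_zero] at h2
  refine tendsto_nhds_unique h1 (h2.congr fun n => ?_)
  exact (gauss_finite X n).symm


/-- The three polynomial identities in characteristic five. -/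
lemma poly_two {K : Type*} [Field K] (h5 : (5 : K) = 0) (m : K) :
    (m^2 + m - 1)^3 * (m^5*(1+m)^4 - m^4*(1-m)^2*(1+m)^2 - m^3*(1-m)^4)
      = m^3 * ((1+m)^2 - m^2*(1-m)*(1+m) - m^4*(1-m)^2)^2 := by
  linear_combination ((-2)*m^4 + (2)*m^5 + (-4)*m^6 + (2)*m^7 + (6)*m^8 + (-8)*m^9 + (-6)*m^10 + (2)*m^11 + (4)*m^12 + (2)*m^13 + (2)*m^14) * h5

lemma poly_three {K : Type*} [Field K] (h5 : (5 : K) = 0) (m : K) :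
    (m^2*(1+m)^2 + m^2*(1-m)*(1+m) - m^2*(1-m)^2)^3 *
      ((1+m)^2 - m^2*(1-m)*(1+m) - m^4*(1-m)^2)
      = (m^5*(1+m)^4 - m^4*(1-m)^2*(1+m)^2 - m^3*(1-m)^4)^2 := by
  linear_combination ((4)*m^7 + (10)*m^8 + (36)*m^9 + (-8)*m^10 + (-4)*m^12 + (-8)*m^14 + (-36)*m^15 + (10)*m^16 + (-4)*m^17) * h5

lemma poly_one {K : Type*} [Field K] (h5 : (5 : K) = 0) (m : K) :
    (m*(1+m)^2 + 2*m^3*(1-m)*(1+m) - 2*m*(1-m)*(1+m) + m^3*(1-m)^2)^3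
      = ((1+m)^2 - m^2*(1-m)*(1+m) - m^4*(1-m)^2) *
        (m^5*(1+m)^4 - m^4*(1-m)^2*(1+m)^2 - m^3*(1-m)^4) := by
  linear_combination ((1)*m^4 + (1)*m^5 + (-14)*m^6 + (-8)*m^7 + (53)*m^8 + (14)*m^9 + (-53)*m^10 + (-8)*m^11 + (14)*m^12 + (1)*m^13 + (-1)*m^14) * h5

/-- The relation between the two Rogers-Ramanujan parameters. -/
lemma rr_relation {K : Type*} [Field K] (h2 : (2 : K) ≠ 0)
    {q F G Φ a d A D p r : K} (hF : F ≠ 0) (hG : G ≠ 0) (ha : a ≠ 0) (hA : A ≠ 0)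
    (hΦ : F^2 = G * Φ) (had : a * d = - F^2) (hAD : A * D = - G^2)
    (e1 : -2 * (a * F) = A * p - q * (G * r))
    (e3 : -2 * (F * d) = - (G * p) + q * (D * r)) (e4 : d^2 = A * r + D * Φ) :
    (a^2 * G - A * F^2) * a * A^2 = q * (a^2 * G + A * F^2) * F * G^2 := by
  obtain rfl : Φ = F^2 / G := by field_simp; linear_combination -hΦ
  obtain rfl : d = -F^2 / a := by field_simp; linear_combination had
  obtain rfl : D = -G^2 / A := by field_simp; linear_combination hAD
  have h : -2 * F * (a^2 * G - F^2 * A) / (a * G) = -2 * (q * (G * r)) := by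
    have e3' : -2 * (F * (-F^2 / a)) * (A / G) = - (A * p) - q * (G * r) := by
      rw [e3]; field_simp; ring
    have e : -2 * F * (a^2 * G - F^2 * A) / (a * G)
        = -2 * (a * F) + -2 * (F * (-F^2 / a)) * (A / G) := by field_simp; ring
    rw [e]
    linear_combination e1 + e3'
  have hr : r = ((-F^2 / a)^2 - (-G^2 / A) * (F^2 / G)) / A := by
    rw [e4]; field_simp; ring
  rw [hr] at h
  field_simp at h
  linear_combination -h

lemma cubes {K : Type*} [Field K] (h5 : (5 : K) = 0) (h2 : (2 : K) ≠ 0)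
    {q f g a d A D : K} (hq : q ≠ 0) (hf0 : f ≠ 0) (hg0 : g ≠ 0) (ha : a ≠ 0) (hA : A ≠ 0)
    (had : a * d = - (f^5)^2) (hAD : A * D = - (g^5)^2)
    (hf : f = a^5 - q * f^25 + q^2 * d^5) (hg : g = A^5 - q^2 * g^25 + q^4 * D^5)
    (rel : (a^2 * g^5 - A * (f^5)^2) * a * A^2 =
      q * (a^2 * g^5 + A * (f^5)^2) * f^5 * (g^5)^2) :
    ((d^2 * A + (f^5)^2 * g^5 + a^2 * D)^3 * f^18 = g^39) ∧
    ((a * A^2 + q * f^5 * (g^5)^2 + q^2 * (d * D^2))^3 * g^18 = f^39) ∧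
    (((2 * a^2 * (-2 * (a * f^5)) + q * (2 * (-(f^5)^2) * d^2 + (-2 * (f^5 * d))^2)) * A
      - q * (g^5 * (2 * a^2 * d^2 + 2 * (-2 * (a * f^5)) * (-2 * (f^5 * d)) + (-(f^5)^2)^2))
      + q * (D * (2 * a^2 * (-(f^5)^2) + (-2 * (a * f^5))^2
          + q * (2 * (-2 * (f^5 * d)) * d^2))))^3 * g^9 = f^36) := by
  obtain ⟨x, rfl⟩ : ∃ x, a = f^5 * x := ⟨a / f^5, by field_simp⟩
  have hx : x ≠ 0 := by rintro rfl; simp at ha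
  obtain ⟨m, rfl⟩ : ∃ m, A = g^5 * (m * x^2) := ⟨A / g^5 / x^2, by field_simp⟩
  have hm : m ≠ 0 := by rintro rfl; simp at hA
  obtain rfl : d = - f^5 / x := by field_simp; apply mul_left_cancel₀ (pow_ne_zero 5 hf0); linear_combination had
  obtain rfl : D = - g^5 / (m * x^2) := by field_simp; apply mul_left_cancel₀ (pow_ne_zero 5 hg0); linear_combination hAD
  have rel' : (1 - m) * x^5 * m^2 = q * (1 + m) := by
    have : f^15 * g^15 * x^2 ≠ 0 := by positivity
    apply mul_left_cancel₀ this
    linear_combination rel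
  have hp : 1 + m ≠ 0 := by
    intro h
    rw [h, mul_zero] at rel'
    have h1 : 1 - m = 0 := by simpa [hx, hm] using rel'
    exact h2 (by linear_combination h + h1)
  obtain rfl : q = x^5 * (m^2 * (1-m)) / (1+m) := by field_simp; linear_combination -rel'
  set P1 := (1+m)^2 - m^2*(1-m)*(1+m) - m^4*(1-m)^2 with hP1
  set P2 := m^5*(1+m)^4 - m^4*(1-m)^2*(1+m)^2 - m^3*(1-m)^4 with hP2
  have F1 : (1+m)^2 = f^24 * x^5 * P1 := by
    field_simp at hf
    linear_combination hf
  have F2 : (1+m)^4 = g^24 * x^10 * P2 := by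
    field_simp at hg
    linear_combination hg
  have q2 := poly_two h5 m
  have q3 := poly_three h5 m
  have q1 := poly_one h5 m
  rw [← hP1, ← hP2] at q1 q2 q3
  have hP10 : P1 ≠ 0 := by rintro h; rw [h] at F1; simp [hp] at F1
  have hP20 : P2 ≠ 0 := by rintro h; rw [h] at F2; simp [hp] at F2
  refine ⟨?_, ?_, ?_⟩
  · have : f^48 * (m^2+m-1)^3 = g^24 * m^3 := by
      have hx10 : x^10 * P2 ≠ 0 := by positivity
      apply mul_left_cancel₀ hx10
      linear_combination x^10 * f^48 * q2 + m^3*(F2 - ((1+m)^2 + f^24 * x^5 * P1) * F1)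
    field_simp
    linear_combination this
  · have : g^48 * x^15 * (m^2*(1+m)^2 + m^2*(1-m)*(1+m) - m^2*(1-m)^2)^3 = f^24 * (1+m)^6 := by
      have hx10 : x^5 * P1 ≠ 0 := by positivity
      apply mul_left_cancel₀ hx10
      linear_combination x^20 * g^48 * q3 + (1+m)^6 * F1 - ((1+m)^4 + g^24 * x^10 * P2) * F2
    field_simp
    linear_combination this
  · have key : ((2 * (f^5*x)^2 * (-2 * ((f^5*x) * f^5)) + x^5 * (m^2 * (1-m)) / (1+m) *
          (2 * (-(f^5)^2) * (- f^5 / x)^2 + (-2 * (f^5 * (- f^5 / x)))^2)) * (g^5 * (m * x^2))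
      - x^5 * (m^2 * (1-m)) / (1+m) * (g^5 * (2 * (f^5*x)^2 * (- f^5 / x)^2
          + 2 * (-2 * ((f^5*x) * f^5)) * (-2 * (f^5 * (- f^5 / x))) + (-(f^5)^2)^2))
      + x^5 * (m^2 * (1-m)) / (1+m) * ((- g^5 / (m * x^2)) * (2 * (f^5*x)^2 * (-(f^5)^2)
          + (-2 * ((f^5*x) * f^5))^2
          + x^5 * (m^2 * (1-m)) / (1+m) * (2 * (-2 * (f^5 * (- f^5 / x))) * (- f^5 / x)^2))))
      = f^20 * g^5 * x^5 * (m*(1+m)^2 + 2*m^3*(1-m)*(1+m) - 2*m*(1-m)*(1+m) + m^3*(1-m)^2)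
        / (1+m)^2 := by
      field_simp
      linear_combination (- (1+m)^2 + m*(1-m)*(1+m) - m^2*(1-m)^2) * h5
    rw [key, div_pow, mul_pow _ (_ + _), q1]
    field_simp
    linear_combination (- (1+m)^4 * F1 - f^24 * x^5 * P1 * F2)


/-- Comparison of the five components of `f ^ 2 = g * φ`. -/
lemma classes {f g φ a d p r A D : (ZMod 5)⟦X⟧}
    (hf : f = a^5 - X * f^25 + X^2 * d^5) (hg : g = A^5 - X^2 * g^25 + X^4 * D^5)
    (hφ : φ = φ^25 + X * p^5 + X^4 * r^5) (hfg : f^2 = g * φ) :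
    a^2 = A * φ^5 + X * (D * p) ∧ -2 * (a * f^5) = A * p - X * (g^5 * r) ∧
    f^10 + 2 * (a * d) = - (g^5 * φ^5) ∧ -2 * (f^5 * d) = - (g^5 * p) + X * (D * r) ∧
    d^2 = A * r + D * φ^5 := by
  have h1 : f^2 = E (a^2) + X * E (-2 * (a * f^5)) + X^2 * E (f^10 + 2 * (a * d))
      + X^3 * E (-2 * (f^5 * d)) + X^4 * E (d^2) := by
    simp only [map_mul, map_add, map_sub, map_neg, map_pow, map_ofNat, expand_X]
    simp only [E_eq_pow]
    linear_combination (f + (a^5 - X * f^25 + X^2 * d^5)) * hf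
  have h2 : f^2 = E (A * φ^5 + X * (D * p)) + X * E (A * p - X * (g^5 * r))
      + X^2 * E (- (g^5 * φ^5)) + X^3 * E (- (g^5 * p) + X * (D * r))
      + X^4 * E (A * r + D * φ^5) := by
    simp only [map_mul, map_add, map_sub, map_neg, map_pow, map_ofNat, expand_X]
    simp only [E_eq_pow]
    linear_combination hfg + φ * hg + (A^5 - X^2 * g^25 + X^4 * D^5) * hφ
  obtain ⟨u0, u1, u2, u3, u4⟩ := U_of_decomp h1
  obtain ⟨v0, v1, v2, v3, v4⟩ := U_of_decomp h2
  exact ⟨u0.symm.trans v0, u1.symm.trans v1, u2.symm.trans v2, u3.symm.trans v3, u4.symm.trans v4⟩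

lemma five_eq_zero : (5 : (ZMod 5)⟦X⟧) = 0 := by
  rw [← map_ofNat (C (R := ZMod 5)) 5, show (OfNat.ofNat 5 : ZMod 5) = 0 from by decide, map_zero]

lemma ne_zero_of_const {P : (ZMod 5)⟦X⟧} (h : constantCoeff P = 1) : P ≠ 0 := by
  rintro rfl
  simp at h

lemma two_ne : (2 : (ZMod 5)⟦X⟧) ≠ 0 := by
  intro h
  have := congrArg constantCoeff h
  rw [map_ofNat, map_zero] at this
  exact absurd this (by decide)

/-- The three closed forms. -/
lemma closed_forms {f g φ a d p r A D : (ZMod 5)⟦X⟧}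
    (hf0 : constantCoeff f = 1) (hg0 : constantCoeff g = 1)
    (ha0 : constantCoeff a = 1) (hA0 : constantCoeff A = 1)
    (hf : f = a^5 - X * f^25 + X^2 * d^5) (hg : g = A^5 - X^2 * g^25 + X^4 * D^5)
    (hφ : φ = φ^25 + X * p^5 + X^4 * r^5) (hfg : f^2 = g * φ)
    (had : a * d = - (f^5)^2) (hAD : A * D = - (g^5)^2) :
    U 4 (f^2 * g) * f^6 = g^13 ∧ U 0 (g^2 * f) * g^6 = f^13 ∧ U 1 (f^4 * g) * g^3 = f^12 := by
  have hd0 : constantCoeff d = -1 := by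
    have := congrArg constantCoeff had
    simpa [ha0, hf0] using this
  have hD0 : constantCoeff D = -1 := by
    have := congrArg constantCoeff hAD
    simpa [hA0, hg0] using this
  let K := FractionRing (ZMod 5)⟦X⟧
  let ι : (ZMod 5)⟦X⟧ →+* K := algebraMap _ K
  have hι : Function.Injective ι := IsFractionRing.injective _ K
  have hne : ∀ P : (ZMod 5)⟦X⟧, P ≠ 0 → ι P ≠ 0 := fun P hP => by
    rwa [Ne, map_eq_zero_iff ι hι]
  have h5 : (5 : K) = 0 := by
    have := congrArg ι five_eq_zero
    rwa [map_ofNat, map_zero] at this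
  have h2 : (2 : K) ≠ 0 := by
    have := hne _ two_ne
    rwa [map_ofNat] at this
  have hX := hne X X_ne_zero
  have hfn := hne f (ne_zero_of_const hf0)
  have hgn := hne g (ne_zero_of_const hg0)
  have han := hne a (ne_zero_of_const ha0)
  have hAn := hne A (ne_zero_of_const hA0)
  obtain ⟨e0, e1, e2, e3, e4⟩ := classes hf hg hφ hfg
  have hΦ : (f^5)^2 = g^5 * φ^5 := by linear_combination (f^8 + f^6*(g*φ) + f^4*(g*φ)^2
    + f^2*(g*φ)^3 + (g*φ)^4) * hfg
  have k0 := congrArg ι e0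
  have k1 := congrArg ι e1
  have k3 := congrArg ι e3
  have k4 := congrArg ι e4
  have kf := congrArg ι hf
  have kg := congrArg ι hg
  have kd := congrArg ι had
  have kD := congrArg ι hAD
  have kΦ := congrArg ι hΦ
  simp only [map_mul, map_add, map_sub, map_neg, map_pow, map_ofNat] at k0 k1 k3 k4 kf kg kd kD kΦ
  have rel := rr_relation h2 (p := ι p) (r := ι r) (pow_ne_zero 5 hfn) (pow_ne_zero 5 hgn) han hAn
    kΦ kd kD k1 k3 k4
  obtain ⟨c2, c3, c1⟩ := cubes h5 h2 hX hfn hgn han hAn kd kD kf kg rel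
  simp only [← map_ofNat ι, ← RingHom.map_pow, ← RingHom.map_mul, ← RingHom.map_add,
    ← RingHom.map_sub, ← RingHom.map_neg] at c1 c2 c3
  replace c1 := hι c1
  replace c2 := hι c2
  replace c3 := hι c3
  have t2 : f^10 + 2 * (a * d) = - (f^5)^2 := by linear_combination 2 * had
  have d2 : f^2 = E (a^2) + X * E (-2 * (a * f^5)) + X^2 * E (-(f^5)^2)
      + X^3 * E (-2 * (f^5 * d)) + X^4 * E (d^2) := by
    rw [← t2]
    simp only [map_mul, map_add, map_sub, map_neg, map_pow, map_ofNat, expand_X]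
    simp only [E_eq_pow]
    linear_combination (f + (a^5 - X * f^25 + X^2 * d^5)) * hf
  have u2 : U 4 (f^2 * g) = d^2 * A + (f^5)^2 * g^5 + a^2 * D := by
    have : f^2 * g = E (a^2 * A - X * (-2 * (f^5 * d)) * g^5 + X * (-2 * (a * f^5)) * D)
        + X * E (-2 * (a * f^5) * A - X * d^2 * g^5 + X * (-(f^5)^2) * D)
        + X^2 * E (-(f^5)^2 * A - a^2 * g^5 + X * (-2 * (f^5 * d)) * D)
        + X^3 * E (-2 * (f^5 * d) * A - (-2 * (a * f^5)) * g^5 + X * d^2 * D)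
        + X^4 * E (d^2 * A + (f^5)^2 * g^5 + a^2 * D) := by
      simp only [map_mul, map_add, map_sub, map_neg, map_pow, map_ofNat, expand_X] at d2 ⊢
      simp only [E_eq_pow] at d2 ⊢
      linear_combination g * d2 + (a^10 - 2 * X * a^5 * f^25 - X^2 * f^50
        - 2 * X^3 * f^25 * d^5 + X^4 * d^10) * hg
    exact (U_of_decomp this).2.2.2.2
  have u3 : U 0 (g^2 * f) = a * A^2 + X * f^5 * (g^5)^2 + X^2 * (d * D^2) := by
    have s2 : (g^25)^2 + 2 * (A * D)^5 = - (g^25)^2 := by rw [hAD]; ring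
    have : g^2 * f = E (a * A^2 + X * f^5 * (g^5)^2 + X^2 * (d * D^2))
        + X * E (- (f^5 * A^2) - 2 * X * (a * g^5 * D) - X * (d * (g^5)^2))
        + X^2 * E (d * A^2 - 2 * a * A * g^5 + 2 * X * (f^5 * g^5 * D))
        + X^3 * E (2 * f^5 * A * g^5 + X * (a * D^2) - 2 * X * (d * g^5 * D))
        + X^4 * E (- (a * (g^5)^2) - 2 * d * A * g^5 - X * (f^5 * D^2)) := by
      simp only [map_mul, map_add, map_sub, map_neg, map_pow, map_ofNat, expand_X]
      simp only [E_eq_pow]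
      linear_combination f * (g + (A^5 - X^2 * g^25 + X^4 * D^5)) * hg
        + (A^5 - X^2 * g^25 + X^4 * D^5)^2 * hf
        + X^4 * (a^5 - X * f^25 + X^2 * d^5) * s2
    exact (U_of_decomp this).1
  have u1 : U 1 (f^4 * g) =
      ((2 * a^2 * (-2 * (a * f^5)) + X * (2 * (-(f^5)^2) * d^2 + (-2 * (f^5 * d))^2)) * A
      - X * (g^5 * (2 * a^2 * d^2 + 2 * (-2 * (a * f^5)) * (-2 * (f^5 * d)) + (-(f^5)^2)^2))
      + X * (D * (2 * a^2 * (-(f^5)^2) + (-2 * (a * f^5))^2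
          + X * (2 * (-2 * (f^5 * d)) * d^2)))) := by
    generalize hc0 : a^2 = c0 at d2 ⊢
    generalize hc1 : -2 * (a * f^5) = c1 at d2 ⊢
    generalize hc2 : -(f^5)^2 = c2 at d2 ⊢
    generalize hc3 : -2 * (f^5 * d) = c3 at d2 ⊢
    generalize hc4 : d^2 = c4 at d2 ⊢
    generalize he0 : c0^2 + X * (2 * c1 * c4 + 2 * c2 * c3) = e0
    generalize he1 : 2 * c0 * c1 + X * (2 * c2 * c4 + c3^2) = e1
    generalize he2 : 2 * c0 * c2 + c1^2 + X * (2 * c3 * c4) = e2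
    generalize he3 : 2 * c0 * c3 + 2 * c1 * c2 + X * c4^2 = e3
    generalize he4 : 2 * c0 * c4 + 2 * c1 * c3 + c2^2 = e4
    have d4 : f^4 = E e0 + X * E e1 + X^2 * E e2 + X^3 * E e3 + X^4 * E e4 := by
      rw [← he0, ← he1, ← he2, ← he3, ← he4]
      simp only [map_mul, map_add, map_sub, map_neg, map_pow, map_ofNat, expand_X]
      linear_combination (f^2 + (E c0 + X * E c1 + X^2 * E c2 + X^3 * E c3 + X^4 * E c4)) * d2
    have : f^4 * g = E (e0 * A - X * e3 * g^5 + X * e1 * D)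
        + X * E (e1 * A - X * (g^5 * e4) + X * (D * e2))
        + X^2 * E (e2 * A - e0 * g^5 + X * e3 * D)
        + X^3 * E (e3 * A - e1 * g^5 + X * e4 * D)
        + X^4 * E (e4 * A - e2 * g^5 + e0 * D) := by
      simp only [map_mul, map_add, map_sub, map_neg, map_pow, map_ofNat, expand_X]
      have hg' : g = E A - X^2 * (E g)^5 + X^4 * E D := by
        simp only [E_eq_pow]
        linear_combination hg
      linear_combination g * d4 + (E e0 + X * E e1 + X^2 * E e2 + X^3 * E e3 + X^4 * E e4) * hg'
    exact (U_of_decomp this).2.1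
  rw [u1, u2, u3]
  refine ⟨?_, ?_, ?_⟩
  · apply cube_inj
    · simp [hd0, hA0, hf0, hg0, ha0, hD0]
    · simp [hg0]
    · linear_combination c2
  · apply cube_inj
    · simp [hd0, hA0, hf0, hg0, ha0, hD0]
    · simp [hf0]
    · linear_combination c3
  · apply cube_inj
    · simp [hd0, hA0, hf0, hg0, ha0, hD0]
      decide
    · simp [hf0]
    · linear_combination c1

lemma coeff_iter (B : (ZMod 5)⟦X⟧) (hU : U 0 (U 4 (U 1 B)) = U 1 B) (n : ℕ) :
    coeff (5 * (25 * n + 4) + 1) B = coeff (5 * n + 1) B := by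
  have := congrArg (coeff n) hU
  simp only [U, coeff_mk] at this
  rw [← this]
  congr 2
  ring

lemma constantCoeff_f : constantCoeff f = 1 := by
  have := coeff_pentagonalSeries_pentagonal (ZMod 5) 0
  simpa [pentagonal_def] using this

lemma constantCoeff_D : constantCoeff D = 1 := by
  have h : constantCoeff (D * φ) = constantCoeff f := by rw [D_mul_φ]
  have hφ : constantCoeff φ = 1 := by
    rw [← coeff_zero_eq_constantCoeff_apply, φ, coeff_mk]
    simp
  rwa [map_mul, hφ, mul_one, constantCoeff_f] at h

lemma cycle_aux {f g B : (ZMod 5)⟦X⟧} (hfn : f ≠ 0) (hgn : g ≠ 0) (hB : B * g^4 = f^4)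
    (x2 : U 4 (f^2 * g) * f^6 = g^13) (x3 : U 0 (g^2 * f) * g^6 = f^13)
    (x1 : U 1 (f^4 * g) * g^3 = f^12) : U 0 (U 4 (U 1 B)) = U 1 B := by
  have y1 : g * U 1 B = U 1 (f^4 * g) := by
    rw [← (U_pow_mul g B).2.1]
    refine congrArg (U 1) ?_
    linear_combination g * hB
  have z1 : U 1 B * g^4 = f^12 := by linear_combination g^3 * y1 + x1
  generalize U 1 B = G at *
  have y2 : g * U 4 G = f^2 * U 4 (f^2 * g) := by
    rw [← (U_pow_mul g G).2.2.2.2, ← (U_pow_mul (f^2) _).2.2.2.2]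
    refine congrArg (U 4) ?_
    linear_combination g * z1
  have z2 : U 4 G * f^4 = g^12 := by
    apply mul_left_cancel₀ hgn
    linear_combination f^4 * y2 + x2
  generalize U 4 G = H at *
  have y3 : f * U 0 H = g^2 * U 0 (g^2 * f) := by
    rw [← (U_pow_mul f H).1, ← (U_pow_mul (g^2) _).1]
    refine congrArg (U 0) ?_
    linear_combination f * z2
  have z3 : U 0 H * g^4 = f^12 := by
    apply mul_left_cancel₀ hfn
    linear_combination g^4 * y3 + x3
  apply mul_right_cancel₀ (pow_ne_zero 4 hgn)
  rw [z3, z1]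

lemma U_cycle : U 0 (U 4 (U 1 B)) = U 1 B := by
  have hf0 := constantCoeff_f
  have hg0 : constantCoeff g = 1 := by rw [constantCoeff_expand]; exact hf0
  have hD0 := ne_zero_of_const constantCoeff_D
  have hfg : f^2 = g * φ := by
    linear_combination (-f) * D_mul_φ + φ * D_mul_f
  have hBD : B * D^4 = 1 := by
    apply mul_right_cancel₀ hD0
    linear_combination D_pow
  have hB : B * g^4 = f^4 := by
    rw [← D_mul_f]
    linear_combination f^4 * hBD
  have hf : f = (U 0 f)^5 - X * f^25 + X^2 * (U 2 f)^5 := by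
    have h := decomp f
    rw [f_vanish 3 (by simp), f_vanish 4 (by simp), f_one] at h
    simp only [map_neg, map_zero, E_eq_pow] at h
    linear_combination h
  have hφ : φ = φ^25 + X * (U 1 φ)^5 + X^4 * (U 4 φ)^5 := by
    have h := decomp φ
    rw [φ_vanish 2 (by simp), φ_vanish 3 (by simp), φ_zero] at h
    simp only [map_neg, map_zero, E_eq_pow] at h
    linear_combination h
  have hg : g = (expand 2 (by norm_num) (U 0 f))^5 - X^2 * g^25
      + X^4 * (expand 2 (by norm_num) (U 2 f))^5 := by
    have h := congrArg (expand 2 (by norm_num)) hf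
    simp only [map_mul, map_add, map_sub, map_pow, expand_X] at h
    linear_combination h
  have ha0 : constantCoeff (U 0 f) = 1 := by
    rw [← coeff_zero_eq_constantCoeff_apply, U, coeff_mk]
    simpa using hf0
  have had : U 0 f * U 2 f = - (f^5)^2 := by
    obtain ⟨-, -, e2, -, -⟩ := classes hf hg hφ hfg
    apply mul_left_cancel₀ two_ne
    linear_combination e2 + (f^8 + f^6*(g*φ) + f^4*(g*φ)^2 + f^2*(g*φ)^3 + (g*φ)^4) * hfg
  have hAD : expand 2 (by norm_num) (U 0 f) * expand 2 (by norm_num) (U 2 f) = - (g^5)^2 := by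
    have h := congrArg (expand 2 (by norm_num)) had
    simp only [map_mul, map_neg, map_pow] at h
    exact h
  have hA0 : constantCoeff (expand 2 (by norm_num) (U 0 f)) = 1 := by
    rw [constantCoeff_expand]; exact ha0
  obtain ⟨x2, x3, x1⟩ := closed_forms hf0 hg0 ha0 hA0 hf hg hφ hfg had hAD
  have hfn := ne_zero_of_const hf0
  have hgn := ne_zero_of_const hg0
  exact cycle_aux hfn hgn hB x2 x3 x1

lemma six_dvd (α : ℕ) : ∃ k, 5 ^ (2 * α + 1) = 6 * k + 5 := by
  induction α with
  | zero => exact ⟨0, by norm_num⟩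
  | succ α ih =>
    obtain ⟨k, hk⟩ := ih
    refine ⟨25 * k + 20, ?_⟩
    rw [show 2 * (α + 1) + 1 = 2 * α + 1 + 2 by ring, pow_add, hk]
    ring

lemma index_form (n α : ℕ) : ∃ m, 5 ^ (2 * α + 1) * n + (5 ^ (2 * α + 1) + 1) / 6 = 5 * m + 1 ∧
    coeff (5 * m + 1) B = coeff (5 * n + 1) B := by
  induction α with
  | zero => exact ⟨n, by norm_num, rfl⟩
  | succ α ih =>
    obtain ⟨m, hm, hc⟩ := ih
    refine ⟨25 * m + 4, ?_, by rw [coeff_iter B U_cycle, hc]⟩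
    obtain ⟨k, hk⟩ := six_dvd α
    have h1 : 5 ^ (2 * (α + 1) + 1) = 6 * (25 * k + 20) + 5 := by
      rw [show 2 * (α + 1) + 1 = 2 * α + 1 + 2 by ring, pow_add, hk]
      ring
    rw [hk, show (6 * k + 5 + 1) / 6 = k + 1 by omega] at hm
    rw [h1, show (6 * (25 * k + 20) + 5 + 1) / 6 = 25 * k + 21 by omega]
    linarith

end B5Aux

theorem b5'_internal_cong (n α : ℕ) :
    b5' (5 * n + 1) ≡ b5' (5 ^ (2 * α + 1) * n + (5 ^ (2 * α + 1) + 1) / 6) [MOD 5] := by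
  obtain ⟨m, hm, hc⟩ := B5Aux.index_form n α
  rw [hm, ← ZMod.natCast_eq_natCast_iff]
  simpa [B5Aux.B] using hc.symm
end
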